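/- arXiv:2309.01167 — 5 statements merged into one kernel-verified Lean document; each statement's English description precedes it below -/
import Mathlib

section
/- Let d ≥ 2 and let U be distributed according to the normalized Haar probability measure on U(d). For all index families i, j, i', j' : Fin 2 → Fin d, E[ u(i₁,j₁) u(i₂,j₂) conj(u(i'₁,j'₁)) conj(u(i'₂,j'₂)) ] = ∑_{α, β ∈ S₂} δ(i₁, i'_{α(1)}) δ(i₂, i'_{α(2)}) δ(j₁, j'_{β(1)}) δ(j₂, j'_{β(2)}) · w(α,β), where S₂ is the symmetric group on two elements and w(α,β) = 1/(d²−1) if α = β and w(α,β) = −1/(d(d²−1)) if α ≠ β. -/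
open MeasureTheory Matrix

noncomputable instance {d : ℕ} : MeasurableSpace (Matrix.unitaryGroup (Fin d) ℂ) := borel _
instance {d : ℕ} : BorelSpace (Matrix.unitaryGroup (Fin d) ℂ) := ⟨rfl⟩

set_option maxHeartbeats 1000000 in
open Complex in
lemma helper_alg {d : ℕ} (hd : 2 ≤ d) (F : Fin d → Fin d → Fin d → Fin d → ℂ)
    (hF : ∀ V : Matrix.unitaryGroup (Fin d) ℂ, ∀ a b c e, F a b c e =
      ∑ a', ∑ b', ∑ c', ∑ e', (V : Matrix (Fin d) (Fin d) ℂ) a a' *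
        (V : Matrix (Fin d) (Fin d) ℂ) b b' *
        (starRingEnd ℂ) ((V : Matrix (Fin d) (Fin d) ℂ) c c') *
        (starRingEnd ℂ) ((V : Matrix (Fin d) (Fin d) ℂ) e e') * F a' b' c' e') :
    ∃ X Y : ℂ, ∀ a b c e, F a b c e =
      (if a = c ∧ b = e then X else 0) + (if a = e ∧ b = c then Y else 0) := by
  -- diagonal
  have hdiag : ∀ p a b c e, F a b c e =
      (if a = p then I else 1) * (if b = p then I else 1) * (if c = p then -I else 1) *
        (if e = p then -I else 1) * F a b c e := by
    intro p a b c e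
    have hV : Matrix.diagonal (fun k => if k = p then I else (1:ℂ)) ∈
        Matrix.unitaryGroup (Fin d) ℂ := by
      rw [Matrix.mem_unitaryGroup_iff, Matrix.star_eq_conjTranspose,
        Matrix.diagonal_conjTranspose, Matrix.diagonal_mul_diagonal, ← Matrix.diagonal_one]
      congr 1
      ext k
      by_cases h : k = p <;> simp [h]
    have h := hF ⟨_, hV⟩ a b c e
    have hs : ∀ (v g : Fin d → ℂ) (k : Fin d),
        ∑ l, Matrix.diagonal v k l * g l = v k * g k := by
      intro v g k
      simp [Matrix.diagonal_apply]
    have hcj : ∀ k l, (starRingEnd ℂ) (Matrix.diagonal (fun k => if k = p then I else (1:ℂ)) k l) =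
        Matrix.diagonal (fun k => if k = p then -I else (1:ℂ)) k l := by
      intro k l
      by_cases h1 : k = l
      · subst h1
        by_cases h2 : k = p <;> simp [h2]
      · simp [Matrix.diagonal_apply_ne _ h1]
    simp only [hcj, mul_assoc, ← Finset.mul_sum, hs] at h
    simp only [mul_assoc]
    exact h
  have hzero : ∀ a b c e, ¬ (a = c ∧ b = e) → ¬ (a = e ∧ b = c) → F a b c e = 0 := by
    intro a b c e h1 h2
    have hI : ∀ z x : ℂ, z ≠ 1 → x = z * x → x = 0 := by
      intro z x hz hx
      have : (z - 1) * x = 0 := by linear_combination -hx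
      rcases mul_eq_zero.1 this with h | h
      · exact absurd (sub_eq_zero.1 h) hz
      · exact h
    have hIne : I ≠ 1 := by
      intro h; simpa using congrArg Complex.re h
    by_cases hac : a = c
    · have hbe : b ≠ e := fun h => h1 ⟨hac, h⟩
      subst hac
      refine hI _ _ ?_ (hdiag b a b a e)
      by_cases hab : a = b
      · simp [hab, hbe.symm, hIne]
      · simp [hab, hbe.symm, hIne]
    · by_cases hae : a = e
      · have hbc : b ≠ c := fun h => h2 ⟨hae, h⟩
        subst hae
        refine hI _ _ ?_ (hdiag b a b c a)
        by_cases hab : a = b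
        · simp [hab, hbc.symm, hIne]
        · simp [hab, hbc.symm, hIne]
      · refine hI _ _ ?_ (hdiag a a b c e)
        by_cases hab : b = a
        · simp [hab, Ne.symm hac, Ne.symm hae]; norm_num
        · simp [hab, Ne.symm hac, Ne.symm hae, hIne]
  have hperm : ∀ σ : Equiv.Perm (Fin d), ∀ a b c e,
      F a b c e = F (σ a) (σ b) (σ c) (σ e) := by
    intro σ a b c e
    have hV : Matrix.of (fun k l => if σ k = l then (1:ℂ) else 0) ∈
        Matrix.unitaryGroup (Fin d) ℂ := by
      rw [Matrix.mem_unitaryGroup_iff, Matrix.star_eq_conjTranspose]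
      ext k l
      simp [Matrix.mul_apply, Matrix.one_apply, eq_comm]
    have h := hF ⟨_, hV⟩ a b c e
    have hs : ∀ (g : Fin d → ℂ) (k : Fin d),
        ∑ l, (if σ k = l then (1:ℂ) else 0) * g l = g (σ k) := by
      intro g k
      simp
    have hcj : ∀ k l, (starRingEnd ℂ) (if σ k = l then (1:ℂ) else 0) =
        (if σ k = l then (1:ℂ) else 0) := by
      intro k l
      split_ifs <;> simp
    simp only [Matrix.of_apply, hcj, mul_assoc, ← Finset.mul_sum, hs] at h
    exact h
  have hrot : ∀ p q, p ≠ q → F p p p p = F p q p q + F p q q p := by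
    intro p q hpq
    have hV : Matrix.of (fun k l => (1 + I) / 2 * (if k = l then (1:ℂ) else 0) +
        (1 - I) / 2 * (if Equiv.swap p q k = l then (1:ℂ) else 0)) ∈
        Matrix.unitaryGroup (Fin d) ℂ := by
      rw [Matrix.mem_unitaryGroup_iff, Matrix.star_eq_conjTranspose]
      ext k l
      simp only [Matrix.mul_apply, Matrix.of_apply, Matrix.conjTranspose_apply, Matrix.one_apply,
        add_mul, mul_add, Finset.sum_add_distrib, RCLike.star_def, map_div₀,
        map_add, map_sub, map_one, conj_I, Complex.conj_ofNat, apply_ite (starRingEnd ℂ), map_zero,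
        mul_ite, ite_mul, mul_one, mul_zero, zero_mul, Finset.sum_ite_eq, Finset.mem_univ, if_true]
      have e1 : (k = Equiv.swap p q l) = (Equiv.swap p q k = l) := by
        rw [Equiv.swap_apply_eq_iff]
      have e4 : (Equiv.swap p q k = Equiv.swap p q l) = (k = l) := by
        rw [(Equiv.swap p q).injective.eq_iff]
      simp only [e1, e4]
      have hI2 : I ^ 2 = -1 := I_sq
      split_ifs
      · ring
      · linear_combination (-1 / 2 : ℂ) * hI2
      · linear_combination (1 / 2 : ℂ) * hI2
      · ring
    have h := hF ⟨_, hV⟩ p p p p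
    have hs : ∀ x y : ℂ, ∀ g : Fin d → ℂ, ∑ k, (x * (if p = k then (1:ℂ) else 0) +
        y * (if q = k then (1:ℂ) else 0)) * g k = x * g p + y * g q := by
      intro x y g
      simp [add_mul, Finset.sum_add_distrib]
    have hcj : ∀ k, (starRingEnd ℂ) ((1 + I) / 2 * (if p = k then (1:ℂ) else 0) +
        (1 - I) / 2 * (if q = k then (1:ℂ) else 0)) =
        ((1 - I) / 2 * (if p = k then (1:ℂ) else 0) +
        (1 + I) / 2 * (if q = k then (1:ℂ) else 0)) := by
      intro k
      simp [apply_ite (starRingEnd ℂ), ← sub_eq_add_neg, Complex.conj_ofNat]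
    simp only [Matrix.of_apply, Equiv.swap_apply_left, hcj, mul_assoc, ← Finset.mul_sum, hs] at h
    have hqp := hpq.symm
    rw [hzero p p p q (by simp [hpq]) (by simp [hpq]),
      hzero p p q p (by simp [hpq]) (by simp [hpq]),
      hzero p p q q (by simp [hpq]) (by simp [hpq]),
      hzero p q p p (by simp [hqp]) (by simp [hqp]),
      hzero q p p p (by simp [hqp]) (by simp [hqp]),
      hzero q q p p (by simp [hqp]) (by simp [hqp]),
      hzero q q p q (by simp [hqp]) (by simp [hqp]),
      hzero q q q p (by simp [hqp]) (by simp [hqp]),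
      hzero p q q q (by simp [hpq]) (by simp [hpq]),
      hzero q p q q (by simp [hpq]) (by simp [hpq]),
      hperm (Equiv.swap p q) q q q q, hperm (Equiv.swap p q) q p q p,
      hperm (Equiv.swap p q) q p p q] at h
    simp only [Equiv.swap_apply_left, Equiv.swap_apply_right] at h
    have hI2 : I ^ 2 = -1 := I_sq
    have hI4 : I ^ 4 = 1 := I_pow_four
    ring_nf at h
    simp only [hI2, hI4] at h
    linear_combination 2 * h
  let p : Fin d := ⟨0, by omega⟩
  let q : Fin d := ⟨1, by omega⟩
  have hpq : p ≠ q := by simp [p, q]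
  have hσ : ∀ a b : Fin d, a ≠ b → ∃ σ : Equiv.Perm (Fin d), σ a = p ∧ σ b = q := by
    intro a b hab
    refine ⟨(Equiv.swap a p).trans (Equiv.swap (Equiv.swap a p b) q), ?_, ?_⟩
    · have : p ≠ Equiv.swap a p b := by
        intro h
        have h2 : Equiv.swap a p a = Equiv.swap a p b := by rwa [Equiv.swap_apply_left]
        exact hab ((Equiv.swap a p).injective h2)
      simp [Equiv.swap_apply_of_ne_of_ne this hpq]
    · simp
  refine ⟨F p q p q, F p q q p, ?_⟩
  have hX : ∀ a b, a ≠ b → F a b a b = F p q p q := by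
    intro a b hab
    obtain ⟨σ, h1, h2⟩ := hσ a b hab
    rw [hperm σ, h1, h2]
  have hY : ∀ a b, a ≠ b → F a b b a = F p q q p := by
    intro a b hab
    obtain ⟨σ, h1, h2⟩ := hσ a b hab
    rw [hperm σ, h1, h2]
  intro a b c e
  by_cases h1 : a = c ∧ b = e
  · obtain ⟨rfl, rfl⟩ := h1
    by_cases hab : a = b
    · subst hab
      rw [hperm (Equiv.swap a p)]
      simp [hrot p q hpq]
    · simp [hab, hX]
  · by_cases h2 : a = e ∧ b = c
    · obtain ⟨rfl, rfl⟩ := h2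
      have hab : a ≠ b := fun h => h1 ⟨h, h.symm⟩
      simp [hab, hY]
    · simp [h1, h2, hzero]

lemma helper_integrable {d : ℕ} (μ : Measure (Matrix.unitaryGroup (Fin d) ℂ))
    [IsProbabilityMeasure μ] (a b c e j k l m : Fin d) :
    Integrable (fun U : Matrix.unitaryGroup (Fin d) ℂ =>
      (U : Matrix (Fin d) (Fin d) ℂ) a j * (U : Matrix (Fin d) (Fin d) ℂ) b k *
      (starRingEnd ℂ) ((U : Matrix (Fin d) (Fin d) ℂ) c l) *
      (starRingEnd ℂ) ((U : Matrix (Fin d) (Fin d) ℂ) e m)) μ := by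
  have hc : ∀ a b : Fin d, Continuous (fun U : Matrix.unitaryGroup (Fin d) ℂ =>
      (U : Matrix (Fin d) (Fin d) ℂ) a b) := by
    intro a b
    exact continuous_subtype_val.matrix_elem a b
  refine Integrable.of_bound (C := 1) ?_ ?_
  · refine Continuous.aestronglyMeasurable ?_
    exact (((hc a j).mul (hc b k)).mul (Complex.continuous_conj.comp (hc c l))).mul
      (Complex.continuous_conj.comp (hc e m))
  · refine Filter.Eventually.of_forall fun U => ?_
    have hb := entry_norm_bound_of_unitary U.2
    simp only [norm_mul, RCLike.norm_conj]
    refine mul_le_one₀ (mul_le_one₀ (mul_le_one₀ (hb _ _) (norm_nonneg _) (hb _ _))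
      (norm_nonneg _) (hb _ _)) (norm_nonneg _) (hb _ _)

lemma helper_orth {d : ℕ} (U : Matrix.unitaryGroup (Fin d) ℂ) (j l : Fin d) :
    ∑ a, (U : Matrix (Fin d) (Fin d) ℂ) a j *
      (starRingEnd ℂ) ((U : Matrix (Fin d) (Fin d) ℂ) a l) = if j = l then 1 else 0 := by
  have h := Matrix.mem_unitaryGroup_iff'.1 U.2
  have h2 := congrFun (congrFun h l) j
  rw [Matrix.mul_apply, Matrix.one_apply] at h2
  simp only [Matrix.star_apply, RCLike.star_def] at h2
  simp only [eq_comm (a := j)]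
  rw [← h2]
  exact Finset.sum_congr rfl fun a _ => mul_comm _ _

set_option maxHeartbeats 1000000 in
lemma helper_main {d : ℕ} (hd : 2 ≤ d)
    (μ : Measure (Matrix.unitaryGroup (Fin d) ℂ)) [μ.IsHaarMeasure] [IsProbabilityMeasure μ]
    (a b c e j k l m : Fin d) :
    ∫ U : Matrix.unitaryGroup (Fin d) ℂ,
      (U : Matrix (Fin d) (Fin d) ℂ) a j * (U : Matrix (Fin d) (Fin d) ℂ) b k *
      (starRingEnd ℂ) ((U : Matrix (Fin d) (Fin d) ℂ) c l) *
      (starRingEnd ℂ) ((U : Matrix (Fin d) (Fin d) ℂ) e m) ∂μ =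
    (if a = c ∧ b = e then
      (d * (if j = l ∧ k = m then 1 else 0) - (if j = m ∧ k = l then 1 else 0)) /
        ((d : ℂ) * ((d : ℂ) ^ 2 - 1)) else 0) +
    (if a = e ∧ b = c then
      (d * (if j = m ∧ k = l then 1 else 0) - (if j = l ∧ k = m then 1 else 0)) /
        ((d : ℂ) * ((d : ℂ) ^ 2 - 1)) else 0) := by
  let F : Fin d → Fin d → Fin d → Fin d → ℂ := fun a b c e =>
    ∫ U : Matrix.unitaryGroup (Fin d) ℂ,
      (U : Matrix (Fin d) (Fin d) ℂ) a j * (U : Matrix (Fin d) (Fin d) ℂ) b k *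
      (starRingEnd ℂ) ((U : Matrix (Fin d) (Fin d) ℂ) c l) *
      (starRingEnd ℂ) ((U : Matrix (Fin d) (Fin d) ℂ) e m) ∂μ
  have hint := fun a b c e => helper_integrable μ a b c e j k l m
  obtain ⟨X, Y, hXY⟩ := helper_alg hd F (by
    intro V a b c e
    simp only [F]
    rw [← integral_mul_left_eq_self _ V]
    simp only [← integral_const_mul]
    simp_rw [← integral_finsetSum Finset.univ (fun i _ => (hint _ _ _ i).const_mul _)]
    simp_rw [← integral_finsetSum Finset.univ (fun i _ => integrable_finsetSum Finset.univ
      (fun i2 _ => (hint _ _ i i2).const_mul _))]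
    simp_rw [← integral_finsetSum Finset.univ (fun i _ => integrable_finsetSum Finset.univ
      (fun i2 _ => integrable_finsetSum Finset.univ
      (fun i3 _ => (hint _ i i2 i3).const_mul _)))]
    rw [← integral_finsetSum Finset.univ (fun i _ => integrable_finsetSum Finset.univ
      (fun i2 _ => integrable_finsetSum Finset.univ
      (fun i3 _ => integrable_finsetSum Finset.univ
      (fun i4 _ => (hint i i2 i3 i4).const_mul _))))]
    refine integral_congr_ae (Filter.Eventually.of_forall fun U => ?_)
    simp only [Submonoid.coe_mul, Matrix.mul_apply, map_sum, map_mul]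
    rw [Finset.sum_mul_sum, Finset.sum_mul, Finset.sum_mul]
    refine Finset.sum_congr rfl fun a' _ => ?_
    rw [Finset.sum_mul, Finset.sum_mul]
    refine Finset.sum_congr rfl fun b' _ => ?_
    rw [mul_assoc, Finset.sum_mul_sum, Finset.mul_sum]
    refine Finset.sum_congr rfl fun c' _ => ?_
    rw [Finset.mul_sum]
    refine Finset.sum_congr rfl fun e' _ => ?_
    ring)
  have h1 : ∑ a, ∑ b, F a b a b = if j = l ∧ k = m then 1 else 0 := by
    simp only [F]
    simp_rw [← integral_finsetSum Finset.univ (fun i _ => (hint _ i _ i))]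
    rw [← integral_finsetSum Finset.univ (fun i _ => integrable_finsetSum Finset.univ
      (fun i2 _ => (hint i i2 i i2)))]
    have : ∀ U : Matrix.unitaryGroup (Fin d) ℂ, ∑ a, ∑ b,
        (U : Matrix (Fin d) (Fin d) ℂ) a j * (U : Matrix (Fin d) (Fin d) ℂ) b k *
        (starRingEnd ℂ) ((U : Matrix (Fin d) (Fin d) ℂ) a l) *
        (starRingEnd ℂ) ((U : Matrix (Fin d) (Fin d) ℂ) b m) =
        if j = l ∧ k = m then 1 else 0 := by
      intro U
      have : (if j = l ∧ k = m then (1:ℂ) else 0) =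
          (if j = l then 1 else 0) * (if k = m then 1 else 0) := by
        rw [ite_and]; split_ifs <;> simp
      rw [this, ← helper_orth U k m, ← helper_orth U j l, Finset.sum_mul_sum]
      refine Finset.sum_congr rfl fun a _ => Finset.sum_congr rfl fun b _ => ?_
      ring
    simp only [this, integral_const, probReal_univ, one_smul]
  have h2 : ∑ a, ∑ b, F a b b a = if j = m ∧ k = l then 1 else 0 := by
    simp only [F]
    simp_rw [← integral_finsetSum Finset.univ (fun i _ => (hint _ i i _))]
    rw [← integral_finsetSum Finset.univ (fun i _ => integrable_finsetSum Finset.univ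
      (fun i2 _ => (hint i i2 i2 i)))]
    have : ∀ U : Matrix.unitaryGroup (Fin d) ℂ, ∑ a, ∑ b,
        (U : Matrix (Fin d) (Fin d) ℂ) a j * (U : Matrix (Fin d) (Fin d) ℂ) b k *
        (starRingEnd ℂ) ((U : Matrix (Fin d) (Fin d) ℂ) b l) *
        (starRingEnd ℂ) ((U : Matrix (Fin d) (Fin d) ℂ) a m) =
        if j = m ∧ k = l then 1 else 0 := by
      intro U
      have : (if j = m ∧ k = l then (1:ℂ) else 0) =
          (if j = m then 1 else 0) * (if k = l then 1 else 0) := by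
        rw [ite_and]; split_ifs <;> simp
      rw [this, ← helper_orth U k l, ← helper_orth U j m, Finset.sum_mul_sum]
      refine Finset.sum_congr rfl fun a _ => Finset.sum_congr rfl fun b _ => ?_
      ring
    simp only [this, integral_const, probReal_univ, one_smul]
  have hdiagsum : ∀ Z : ℂ, ∑ a : Fin d, ∑ b : Fin d, (if a = b ∧ b = a then Z else 0) = d * Z := by
    intro Z
    have : ∀ a b : Fin d, (a = b ∧ b = a) = (a = b) := by
      intro a b; rw [eq_comm (a := b), and_self]
    simp [this]
  have e1 : (d : ℂ) ^ 2 * X + d * Y = if j = l ∧ k = m then 1 else 0 := by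
    rw [← h1]
    simp only [hXY, Finset.sum_add_distrib, hdiagsum]
    simp
    ring
  have e2 : (d : ℂ) * X + d ^ 2 * Y = if j = m ∧ k = l then 1 else 0 := by
    rw [← h2]
    simp only [hXY, Finset.sum_add_distrib, hdiagsum]
    simp
    ring
  have hd0 : (d : ℂ) ≠ 0 := by
    have : d ≠ 0 := by omega
    exact_mod_cast this
  have hd1 : (d : ℂ) ^ 2 - 1 ≠ 0 := by
    rw [sub_ne_zero]
    have : d ^ 2 ≠ 1 := by nlinarith
    exact_mod_cast this
  change F a b c e = _
  rw [hXY, ← e1, ← e2]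
  congr 1
  · congr 1
    field_simp
    ring
  · congr 1
    field_simp
    ring

/-- Second-order Weingarten formula for the unitary group. The weight is
`Wg(d,(1,1)) = 1/(d²−1)` on the diagonal `α = β` and `Wg(d,(2)) = −1/(d(d²−1))` off it. -/
theorem unitary_haar_second_moment {d : ℕ} (hd : 2 ≤ d)
    (μ : Measure (Matrix.unitaryGroup (Fin d) ℂ)) [μ.IsHaarMeasure] [IsProbabilityMeasure μ]
    (i j i' j' : Fin 2 → Fin d) :
    ∫ U : Matrix.unitaryGroup (Fin d) ℂ,
        (∏ ℓ, (U : Matrix (Fin d) (Fin d) ℂ) (i ℓ) (j ℓ)) *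
        (∏ ℓ, (starRingEnd ℂ) ((U : Matrix (Fin d) (Fin d) ℂ) (i' ℓ) (j' ℓ))) ∂μ
      = ∑ α : Equiv.Perm (Fin 2), ∑ β : Equiv.Perm (Fin 2),
          (∏ ℓ, if i ℓ = i' (α ℓ) then (1 : ℂ) else 0) *
          (∏ ℓ, if j ℓ = j' (β ℓ) then (1 : ℂ) else 0) *
          (if α = β then 1 / ((d : ℂ) ^ 2 - 1) else -1 / ((d : ℂ) * ((d : ℂ) ^ 2 - 1))) := by
  have hd0 : (d : ℂ) ≠ 0 := by
    have : d ≠ 0 := by omega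
    exact_mod_cast this
  have hd1 : (d : ℂ) ^ 2 - 1 ≠ 0 := by
    rw [sub_ne_zero]
    have : d ^ 2 ≠ 1 := by nlinarith
    exact_mod_cast this
  have h := helper_main hd μ (i 0) (i 1) (i' 0) (i' 1) (j 0) (j 1) (j' 0) (j' 1)
  have huniv : (Finset.univ : Finset (Equiv.Perm (Fin 2))) = {1, Equiv.swap 0 1} := by decide
  have hne : (1 : Equiv.Perm (Fin 2)) ≠ Equiv.swap 0 1 := by decide
  have hp : ∀ (x y : Fin 2 → Fin d) (α : Equiv.Perm (Fin 2)),
      (∏ ℓ, if x ℓ = y (α ℓ) then (1:ℂ) else 0) =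
        if x 0 = y (α 0) ∧ x 1 = y (α 1) then 1 else 0 := by
    intro x y α
    rw [Fin.prod_univ_two, ite_and]
    split_ifs <;> simp
  have hp1 : ∀ (x y : Fin 2 → Fin d),
      (∏ ℓ, if x ℓ = y ((1 : Equiv.Perm (Fin 2)) ℓ) then (1:ℂ) else 0) =
        if x 0 = y 0 ∧ x 1 = y 1 then 1 else 0 := fun x y => hp x y 1
  have hp2 : ∀ (x y : Fin 2 → Fin d),
      (∏ ℓ, if x ℓ = y ((Equiv.swap 0 1 : Equiv.Perm (Fin 2)) ℓ) then (1:ℂ) else 0) =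
        if x 0 = y 1 ∧ x 1 = y 0 then 1 else 0 := fun x y => hp x y (Equiv.swap 0 1)
  rw [huniv]
  simp only [Finset.sum_pair hne]
  rw [hp1, hp2, hp1, hp2]
  simp only [if_true, if_neg hne, if_neg hne.symm]
  simp only [Fin.prod_univ_two, ← mul_assoc] at h ⊢
  rw [h]
  clear h
  split_ifs <;> field_simp <;> ring
end

section
/- Let d ≥ 2 and let M be distributed according to the normalized Haar probability measure on O(d). Let P₄ = { {{1,2},{3,4}}, {{1,3},{2,4}}, {{1,4},{2,3}} } denote the three pairings of {1,2,3,4}. For all index families i, j : Fin 4 → Fin d, E[ m(i₁,j₁) m(i₂,j₂) m(i₃,j₃) m(i₄,j₄) ] = ∑_{p, q ∈ P₄} Δ_p(i) Δ_q(j) · w(p,q), where Δ_p(i) = ∏_{{a,b} ∈ p} δ(i_a, i_b), and w(p,q) = (d+1)/(d(d−1)(d+2)) if p = q and w(p,q) = −1/(d(d−1)(d+2)) if p ≠ q. -/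
open MeasureTheory Matrix

noncomputable instance {d : ℕ} : MeasurableSpace (Matrix.orthogonalGroup (Fin d) ℝ) := borel _
instance {d : ℕ} : BorelSpace (Matrix.orthogonalGroup (Fin d) ℝ) := ⟨rfl⟩

/-- The pairings of `{1,2,3,4}`, encoded as the fixed-point-free involutions of `Fin 4`. -/
def pairings4 : Finset (Equiv.Perm (Fin 4)) :=
  Finset.univ.filter fun σ => σ * σ = 1 ∧ ∀ x, σ x ≠ x

noncomputable def T4 {d : ℕ} (μ : Measure (Matrix.orthogonalGroup (Fin d) ℝ)) (j a : Fin 4 → Fin d) : ℝ :=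
  ∫ M : Matrix.orthogonalGroup (Fin d) ℝ,
    ∏ l, (M : Matrix (Fin d) (Fin d) ℝ) (a l) (j l) ∂μ

lemma integrable_T4 {d : ℕ} (μ : Measure (Matrix.orthogonalGroup (Fin d) ℝ))
    [IsProbabilityMeasure μ] (j a : Fin 4 → Fin d) :
    Integrable (fun M : Matrix.orthogonalGroup (Fin d) ℝ =>
      ∏ l, (M : Matrix (Fin d) (Fin d) ℝ) (a l) (j l)) μ := by
  have hc : Continuous (fun M : Matrix.orthogonalGroup (Fin d) ℝ =>
      ∏ l, (M : Matrix (Fin d) (Fin d) ℝ) (a l) (j l)) := by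
    refine continuous_finsetProd _ fun l _ => ?_
    exact continuous_subtype_val.matrix_elem _ _
  refine Integrable.of_bound hc.aestronglyMeasurable 1 (Filter.Eventually.of_forall fun M => ?_)
  rw [norm_prod]
  refine Finset.prod_le_one (fun _ _ => norm_nonneg _) fun l _ => ?_
  exact entry_norm_bound_of_unitary M.2 _ _

lemma T4_left {d : ℕ} (μ : Measure (Matrix.orthogonalGroup (Fin d) ℝ)) [μ.IsHaarMeasure]
    (j a : Fin 4 → Fin d) (A : Matrix (Fin d) (Fin d) ℝ) (hA : Aᵀ * A = 1) :
    T4 μ j a = ∫ M : Matrix.orthogonalGroup (Fin d) ℝ,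
      ∏ l, (A * (M : Matrix (Fin d) (Fin d) ℝ)) (a l) (j l) ∂μ := by
  have hA' : A ∈ Matrix.orthogonalGroup (Fin d) ℝ := by
    rw [Matrix.mem_orthogonalGroup_iff']
    exact hA
  exact (integral_mul_left_eq_self (μ := μ) (fun M : Matrix.orthogonalGroup (Fin d) ℝ =>
    ∏ l, (M : Matrix (Fin d) (Fin d) ℝ) (a l) (j l)) ⟨A, hA'⟩).symm

lemma T4_perm {d : ℕ} (μ : Measure (Matrix.orthogonalGroup (Fin d) ℝ)) [μ.IsHaarMeasure]
    (j a : Fin 4 → Fin d) (σ : Equiv.Perm (Fin d)) :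
    T4 μ j (fun l => σ (a l)) = T4 μ j a := by
  have h := T4_left μ j a (Matrix.of fun x y => if σ x = y then 1 else 0) (by
    ext x y
    simp only [Matrix.mul_apply, Matrix.transpose_apply, Matrix.of_apply, Matrix.one_apply]
    rw [Finset.sum_eq_single (σ.symm x)]
    · simp
    · intro b _ hb
      have : σ b ≠ x := fun h => hb (by simp [← h])
      simp [this]
    · simp)
  rw [h]
  simp [T4, Matrix.mul_apply]

lemma T4_sign {d : ℕ} (μ : Measure (Matrix.orthogonalGroup (Fin d) ℝ)) [μ.IsHaarMeasure]
    (j a : Fin 4 → Fin d) (x : Fin d)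
    (hx : (∏ l, if a l = x then (-1 : ℝ) else 1) = -1) : T4 μ j a = 0 := by
  have h := T4_left μ j a (Matrix.diagonal fun y => if y = x then (-1 : ℝ) else 1) (by
    rw [Matrix.diagonal_transpose, Matrix.diagonal_mul_diagonal, ← Matrix.diagonal_one]
    congr 1
    ext y
    split_ifs <;> simp)
  simp only [Matrix.diagonal_mul, Finset.prod_mul_distrib, hx, integral_const_mul] at h
  have : T4 μ j a = -1 * T4 μ j a := h
  linarith

lemma T4_rot {d : ℕ} (μ : Measure (Matrix.orthogonalGroup (Fin d) ℝ)) [μ.IsHaarMeasure]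
    (j : Fin 4 → Fin d) (a b : Fin d) (hab : a ≠ b) :
    T4 μ j (fun _ => a) = ∫ M : Matrix.orthogonalGroup (Fin d) ℝ,
      ∏ l, ((3/5) * (M : Matrix (Fin d) (Fin d) ℝ) a (j l)
        + (-4/5) * (M : Matrix (Fin d) (Fin d) ℝ) b (j l)) ∂μ := by
  set w : Fin d → ℝ := Pi.single a 1 + Pi.single b 2 with hw
  have hww : w ⬝ᵥ w = 5 := by
    simp [hw, hab, hab.symm]
    norm_num
  have h := T4_left μ j (fun _ => a) (1 - (2/5 : ℝ) • Matrix.vecMulVec w w) (by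
    simp only [Matrix.transpose_sub, Matrix.transpose_one, Matrix.transpose_smul,
      Matrix.transpose_vecMulVec, sub_mul, mul_sub, one_mul, mul_one, Matrix.smul_mul,
      Matrix.mul_smul, Matrix.vecMulVec_mul_vecMulVec, hww]
    ext x y
    simp [Matrix.vecMulVec_apply]
    ring)
  rw [h]
  congr 1
  ext M
  refine Finset.prod_congr rfl fun l _ => ?_
  rw [sub_mul, one_mul, Matrix.smul_mul, Matrix.vecMulVec_mul]
  simp [Matrix.vecMulVec_apply, hw, hab, Matrix.add_vecMul]
  ring

lemma exists_perm2 {d : ℕ} (u v a b : Fin d) (huv : u ≠ v) (hab : a ≠ b) :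
    ∃ σ : Equiv.Perm (Fin d), σ u = a ∧ σ v = b := by
  refine ⟨Equiv.swap (Equiv.swap u a v) b * Equiv.swap u a, ?_, ?_⟩
  · have h : Equiv.swap u a v ≠ a := by
      intro h
      apply huv
      exact ((Equiv.swap u a).injective (h.trans (Equiv.swap_apply_left u a).symm)).symm
    simp [Equiv.swap_apply_of_ne_of_ne h.symm hab]
  · simp

lemma T4_diag {d : ℕ} (μ : Measure (Matrix.orthogonalGroup (Fin d) ℝ)) [μ.IsHaarMeasure]
    [IsProbabilityMeasure μ] (j : Fin 4 → Fin d) (a b : Fin d) (hab : a ≠ b) :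
    T4 μ j ![a, a, a, a] = T4 μ j ![a, a, b, b] + T4 μ j ![a, b, a, b]
      + T4 μ j ![a, b, b, a] := by
  have key : T4 μ j (fun _ => a) = ∑ s : Finset (Fin 4),
      ((3/5 : ℝ) ^ s.card * (-4/5) ^ (4 - s.card)) *
        T4 μ j (fun l => if l ∈ s then a else b) := by
    rw [T4_rot μ j a b hab]
    simp only [T4, ← integral_const_mul]
    rw [← integral_finsetSum]
    · congr 1
      ext M
      rw [Finset.prod_add]
      simp only [Finset.powerset_univ]
      refine Finset.sum_congr rfl fun s _ => ?_
      rw [Finset.prod_mul_distrib, Finset.prod_mul_distrib, Finset.prod_const, Finset.prod_const,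
        ← Finset.prod_sdiff (Finset.subset_univ s), Finset.card_sdiff_of_subset (Finset.subset_univ s)]
      rw [Finset.prod_congr rfl (g := fun l => (M : Matrix (Fin d) (Fin d) ℝ) b (j l)) (s₁ := Finset.univ \ s)
          (f := fun l => (M : Matrix (Fin d) (Fin d) ℝ) (if l ∈ s then a else b) (j l))
          (fun l hl => by simp [(Finset.mem_sdiff.1 hl).2]),
        Finset.prod_congr rfl (g := fun l => (M : Matrix (Fin d) (Fin d) ℝ) a (j l)) (s₁ := s)
          (f := fun l => (M : Matrix (Fin d) (Fin d) ℝ) (if l ∈ s then a else b) (j l))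
          (fun l hl => by simp [hl])]
      simp
      ring
    · intro s _
      exact (integrable_T4 μ j _).const_mul _
  have e : (Finset.univ : Finset (Finset (Fin 4))) = {∅, {0}, {1}, {2}, {3}, {0,1}, {0,2}, {0,3},
    {1,2}, {1,3}, {2,3}, {0,1,2}, {0,1,3}, {0,2,3}, {1,2,3}, {0,1,2,3}} := by decide
  have hf : ∀ s : Finset (Fin 4), (fun l => if l ∈ s then a else b) =
      ![if 0 ∈ s then a else b, if 1 ∈ s then a else b, if 2 ∈ s then a else b,
        if 3 ∈ s then a else b] := by
    intro s
    ext l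
    fin_cases l <;> rfl
  have h0 : (fun _ => a) = ![a, a, a, a] := by
    ext l
    fin_cases l <;> rfl
  have z : ∀ s : Finset (Fin 4), Odd s.card → T4 μ j (fun l => if l ∈ s then a else b) = 0 := by
    intro s hs
    refine T4_sign μ j _ a ?_
    have : ∀ l, ((if l ∈ s then a else b) = a) = (l ∈ s) := by
      intro l
      split_ifs with h <;> simp [h, hab.symm]
    simp only [this]
    rw [Finset.prod_ite]
    simp [hs.neg_one_pow]
  have key2 : T4 μ j (fun _ => a) = ∑ s : Finset (Fin 4) with Even s.card,
      ((3/5 : ℝ) ^ s.card * (-4/5) ^ (4 - s.card)) *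
        T4 μ j (fun l => if l ∈ s then a else b) := by
    rw [key, Finset.sum_filter]
    refine Finset.sum_congr rfl fun s _ => ?_
    split_ifs with h
    · rfl
    · rw [z s (Nat.not_even_iff_odd.1 h), mul_zero]
  have e2 : (Finset.univ.filter fun s : Finset (Fin 4) => Even s.card) = {∅, {0,1}, {0,2}, {0,3},
    {1,2}, {1,3}, {2,3}, {0,1,2,3}} := by decide
  rw [e2] at key2
  have sw : ∀ x : Fin 4 → Fin d, T4 μ j (fun l => Equiv.swap a b (x l)) = T4 μ j x :=
    fun x => T4_perm μ j x _
  have hv : ∀ x y z t : Fin d, (fun l => Equiv.swap a b (![x, y, z, t] l)) =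
      ![Equiv.swap a b x, Equiv.swap a b y, Equiv.swap a b z, Equiv.swap a b t] := by
    intro x y z t
    ext l
    fin_cases l <;> rfl
  have s1 := sw ![a, a, a, a]
  have s2 := sw ![a, a, b, b]
  have s3 := sw ![a, b, a, b]
  have s4 := sw ![a, b, b, a]
  simp only [hv, Equiv.swap_apply_left, Equiv.swap_apply_right] at s1 s2 s3 s4
  rw [h0] at key2
  repeat rw [Finset.sum_insert (by decide)] at key2
  rw [Finset.sum_singleton] at key2
  simp only [hf] at key2
  simp at key2
  rw [s1, s2, s3, s4] at key2
  norm_num at key2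
  linarith

lemma T4_form {d : ℕ} (μ : Measure (Matrix.orthogonalGroup (Fin d) ℝ)) [μ.IsHaarMeasure]
    [IsProbabilityMeasure μ] (j : Fin 4 → Fin d) (u v : Fin d) (huv : u ≠ v) (a b c e : Fin d) :
    T4 μ j ![a, b, c, e] =
      T4 μ j ![u, u, v, v] * (if a = b ∧ c = e then 1 else 0)
      + T4 μ j ![u, v, u, v] * (if a = c ∧ b = e then 1 else 0)
      + T4 μ j ![u, v, v, u] * (if a = e ∧ b = c then 1 else 0) := by
  have hv : ∀ (σ : Equiv.Perm (Fin d)) (x y z t : Fin d), (fun l => σ (![x, y, z, t] l)) =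
      ![σ x, σ y, σ z, σ t] := by
    intro σ x y z t
    ext l
    fin_cases l <;> rfl
  have tr : ∀ a b, a ≠ b → T4 μ j ![a, a, b, b] = T4 μ j ![u, u, v, v] ∧
      T4 μ j ![a, b, a, b] = T4 μ j ![u, v, u, v] ∧
      T4 μ j ![a, b, b, a] = T4 μ j ![u, v, v, u] := by
    intro a b hab
    obtain ⟨σ, h1, h2⟩ := exists_perm2 u v a b huv hab
    have s2 := T4_perm μ j ![u, u, v, v] σ
    have s3 := T4_perm μ j ![u, v, u, v] σ
    have s4 := T4_perm μ j ![u, v, v, u] σ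
    simp only [hv, h1, h2] at s2 s3 s4
    exact ⟨s2, s3, s4⟩
  have dg : ∀ a, T4 μ j ![a, a, a, a] = T4 μ j ![u, u, v, v] + T4 μ j ![u, v, u, v]
      + T4 μ j ![u, v, v, u] := by
    intro a
    obtain ⟨b, hb⟩ : ∃ b, a ≠ b := by
      by_cases h : a = u
      · exact ⟨v, h ▸ huv⟩
      · exact ⟨u, h⟩
    rw [T4_diag μ j a b hb, (tr a b hb).1, (tr a b hb).2.1, (tr a b hb).2.2]
  have sg : ∀ x, ((if a = x then (-1 : ℝ) else 1) * (if b = x then (-1 : ℝ) else 1) *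
      (if c = x then (-1 : ℝ) else 1) * (if e = x then (-1 : ℝ) else 1) = -1) →
      T4 μ j ![a, b, c, e] = 0 := by
    intro x hx
    refine T4_sign μ j _ x ?_
    rw [Fin.prod_univ_four]
    exact hx
  by_cases h1 : a = b
  · subst h1
    by_cases h2 : c = e
    · subst h2
      by_cases h3 : a = c
      · subst h3
        simp [dg a]
      · simp [h3, (tr a c h3).1]
    · by_cases h3 : a = c
      · subst h3
        rw [sg e (by simp [h2])]
        simp [h2]
      · rw [sg c (by simp [h3, Ne.symm h2])]
        simp [h2, h3]
  · by_cases h2 : a = c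
    · subst h2
      by_cases h3 : b = e
      · subst h3
        simp [h1, (tr a b h1).2.1]
      · rw [sg b (by simp [h1, Ne.symm h3])]
        simp [h1, h3, Ne.symm h1]
    · by_cases h3 : a = e
      · subst h3
        by_cases h4 : b = c
        · subst h4
          simp [h1, (tr a b h1).2.2]
        · rw [sg b (by simp [h1, Ne.symm h4])]
          simp [h1, h2, h4]
      · rw [sg a (by simp [Ne.symm h1, Ne.symm h2, Ne.symm h3])]
        simp [h1, h2, h3]

lemma orth_col {d : ℕ} (M : Matrix.orthogonalGroup (Fin d) ℝ) (x y : Fin d) :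
    ∑ a, (M : Matrix (Fin d) (Fin d) ℝ) a x * (M : Matrix (Fin d) (Fin d) ℝ) a y
      = if x = y then 1 else 0 := by
  have h := (Matrix.mem_orthogonalGroup_iff' _ _).1 M.2
  have h2 := congrFun (congrFun h x) y
  rw [Matrix.mul_apply, Matrix.one_apply] at h2
  exact h2

lemma gram1 {d : ℕ} (μ : Measure (Matrix.orthogonalGroup (Fin d) ℝ))
    [IsProbabilityMeasure μ] (j : Fin 4 → Fin d) (f : Fin d → Fin d → Fin 4 → Fin d) (r : ℝ)
    (h : ∀ M : Matrix.orthogonalGroup (Fin d) ℝ,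
      ∑ a, ∑ c, ∏ l, (M : Matrix (Fin d) (Fin d) ℝ) (f a c l) (j l) = r) :
    ∑ a, ∑ c, T4 μ j (f a c) = r := by
  simp only [T4]
  have : ∀ a, ∑ c, ∫ M : Matrix.orthogonalGroup (Fin d) ℝ,
      ∏ l, (M : Matrix (Fin d) (Fin d) ℝ) (f a c l) (j l) ∂μ =
      ∫ M : Matrix.orthogonalGroup (Fin d) ℝ,
      ∑ c, ∏ l, (M : Matrix (Fin d) (Fin d) ℝ) (f a c l) (j l) ∂μ := by
    intro a
    rw [integral_finsetSum]
    intro c _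
    exact integrable_T4 μ j _
  simp only [this]
  rw [← integral_finsetSum]
  · simp [h]
  · intro a _
    exact integrable_finsetSum _ fun c _ => integrable_T4 μ j _

lemma sum_mul_aux {d : ℕ} (M : Matrix.orthogonalGroup (Fin d) ℝ) (x y z t : Fin d)
    (g : Fin d → Fin d → ℝ)
    (hg : ∀ a c, g a c = ((M : Matrix (Fin d) (Fin d) ℝ) a x * (M : Matrix (Fin d) (Fin d) ℝ) a y) *
      ((M : Matrix (Fin d) (Fin d) ℝ) c z * (M : Matrix (Fin d) (Fin d) ℝ) c t)) :
    ∑ a, ∑ c, g a c = if x = y ∧ z = t then 1 else 0 := by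
  simp only [hg, ← Finset.mul_sum, ← Finset.sum_mul, orth_col]
  split_ifs <;> simp_all

lemma pairings4_eq : pairings4 = {Equiv.swap 0 1 * Equiv.swap 2 3,
    Equiv.swap 0 2 * Equiv.swap 1 3, Equiv.swap 0 3 * Equiv.swap 1 2} := by
  decide

/-- Second-order Weingarten formula for the orthogonal group. For a pairing `p`, encoded as a
fixed-point-free involution, `Δ_p(i) = ∏_x δ(i_x, i_{p x})` (the Kronecker delta is `{0,1}`-valued
and idempotent, so this is the product over the blocks of `p`). The weight is
`Wg(d,(1,1)) = (d+1)/(d(d−1)(d+2))` for `p = q` and `Wg(d,(2)) = −1/(d(d−1)(d+2))` otherwise. -/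
theorem orthogonal_haar_second_moment {d : ℕ} (hd : 2 ≤ d)
    (μ : Measure (Matrix.orthogonalGroup (Fin d) ℝ)) [μ.IsHaarMeasure] [IsProbabilityMeasure μ]
    (i j : Fin 4 → Fin d) :
    ∫ M : Matrix.orthogonalGroup (Fin d) ℝ,
        ∏ ℓ, (M : Matrix (Fin d) (Fin d) ℝ) (i ℓ) (j ℓ) ∂μ
      = ∑ p ∈ pairings4, ∑ q ∈ pairings4,
          (∏ x, if i x = i (p x) then (1 : ℝ) else 0) *
          (∏ x, if j x = j (q x) then (1 : ℝ) else 0) *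
          (if p = q then ((d : ℝ) + 1) / ((d : ℝ) * ((d : ℝ) - 1) * ((d : ℝ) + 2))
           else -1 / ((d : ℝ) * ((d : ℝ) - 1) * ((d : ℝ) + 2))) := by
  have huv : (⟨0, by omega⟩ : Fin d) ≠ ⟨1, by omega⟩ := by simp
  have hform := T4_form μ j _ _ huv
  generalize T4 μ j _ = A at hform
  generalize T4 μ j _ = B at hform
  generalize T4 μ j _ = C at hform
  have g1 := gram1 μ j (fun a c => ![a, a, c, c]) _ (fun M =>
    sum_mul_aux M (j 0) (j 1) (j 2) (j 3) _ fun a c => by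
      simp [Fin.prod_univ_four]; ring)
  have g2 := gram1 μ j (fun a c => ![a, c, a, c]) _ (fun M =>
    sum_mul_aux M (j 0) (j 2) (j 1) (j 3) _ fun a c => by
      simp [Fin.prod_univ_four]; ring)
  have g3 := gram1 μ j (fun a c => ![a, c, c, a]) _ (fun M =>
    sum_mul_aux M (j 0) (j 3) (j 1) (j 2) _ fun a c => by
      simp [Fin.prod_univ_four]; ring)
  have q0 : ∀ x y : Fin d, (x = y ∧ y = x) ↔ x = y := fun x y => ⟨fun h => h.1, fun h => ⟨h, h.symm⟩⟩
  simp only [hform, and_self, if_true, q0, Finset.sum_add_distrib, ← Finset.mul_sum,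
    Finset.sum_ite_eq, Finset.mem_univ, Finset.sum_const, Finset.card_univ, Fintype.card_fin,
    nsmul_eq_mul, mul_one] at g1 g2 g3
  have hi : ∫ M : Matrix.orthogonalGroup (Fin d) ℝ,
        ∏ ℓ, (M : Matrix (Fin d) (Fin d) ℝ) (i ℓ) (j ℓ) ∂μ = T4 μ j ![i 0, i 1, i 2, i 3] := by
    have : i = ![i 0, i 1, i 2, i 3] := by
      ext l
      fin_cases l <;> rfl
    rw [← this]
    rfl
  rw [hi, hform]
  have D1 : ∀ k : Fin 4 → Fin d, (∏ x, if k x = k ((Equiv.swap 0 1 * Equiv.swap 2 3 :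
      Equiv.Perm (Fin 4)) x) then (1 : ℝ) else 0) = if k 0 = k 1 ∧ k 2 = k 3 then 1 else 0 := by
    intro k
    rw [Fin.prod_univ_four, show (Equiv.swap 0 1 * Equiv.swap 2 3 : Equiv.Perm (Fin 4)) 0 = 1 by decide,
      show (Equiv.swap 0 1 * Equiv.swap 2 3 : Equiv.Perm (Fin 4)) 1 = 0 by decide,
      show (Equiv.swap 0 1 * Equiv.swap 2 3 : Equiv.Perm (Fin 4)) 2 = 3 by decide,
      show (Equiv.swap 0 1 * Equiv.swap 2 3 : Equiv.Perm (Fin 4)) 3 = 2 by decide]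
    grind
  have D2 : ∀ k : Fin 4 → Fin d, (∏ x, if k x = k ((Equiv.swap 0 2 * Equiv.swap 1 3 :
      Equiv.Perm (Fin 4)) x) then (1 : ℝ) else 0) = if k 0 = k 2 ∧ k 1 = k 3 then 1 else 0 := by
    intro k
    rw [Fin.prod_univ_four, show (Equiv.swap 0 2 * Equiv.swap 1 3 : Equiv.Perm (Fin 4)) 0 = 2 by decide,
      show (Equiv.swap 0 2 * Equiv.swap 1 3 : Equiv.Perm (Fin 4)) 1 = 3 by decide,
      show (Equiv.swap 0 2 * Equiv.swap 1 3 : Equiv.Perm (Fin 4)) 2 = 0 by decide,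
      show (Equiv.swap 0 2 * Equiv.swap 1 3 : Equiv.Perm (Fin 4)) 3 = 1 by decide]
    grind
  have D3 : ∀ k : Fin 4 → Fin d, (∏ x, if k x = k ((Equiv.swap 0 3 * Equiv.swap 1 2 :
      Equiv.Perm (Fin 4)) x) then (1 : ℝ) else 0) = if k 0 = k 3 ∧ k 1 = k 2 then 1 else 0 := by
    intro k
    rw [Fin.prod_univ_four, show (Equiv.swap 0 3 * Equiv.swap 1 2 : Equiv.Perm (Fin 4)) 0 = 3 by decide,
      show (Equiv.swap 0 3 * Equiv.swap 1 2 : Equiv.Perm (Fin 4)) 1 = 2 by decide,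
      show (Equiv.swap 0 3 * Equiv.swap 1 2 : Equiv.Perm (Fin 4)) 2 = 1 by decide,
      show (Equiv.swap 0 3 * Equiv.swap 1 2 : Equiv.Perm (Fin 4)) 3 = 0 by decide]
    grind
  have n12 : (Equiv.swap 0 1 * Equiv.swap 2 3 : Equiv.Perm (Fin 4)) ≠
    Equiv.swap 0 2 * Equiv.swap 1 3 := by decide
  have n13 : (Equiv.swap 0 1 * Equiv.swap 2 3 : Equiv.Perm (Fin 4)) ≠
    Equiv.swap 0 3 * Equiv.swap 1 2 := by decide
  have n23 : (Equiv.swap 0 2 * Equiv.swap 1 3 : Equiv.Perm (Fin 4)) ≠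
    Equiv.swap 0 3 * Equiv.swap 1 2 := by decide
  rw [pairings4_eq]
  have hs : ∀ f : Equiv.Perm (Fin 4) → ℝ, ∑ p ∈ ({Equiv.swap 0 1 * Equiv.swap 2 3,
    Equiv.swap 0 2 * Equiv.swap 1 3, Equiv.swap 0 3 * Equiv.swap 1 2} :
      Finset (Equiv.Perm (Fin 4))), f p = f (Equiv.swap 0 1 * Equiv.swap 2 3) +
      (f (Equiv.swap 0 2 * Equiv.swap 1 3) + f (Equiv.swap 0 3 * Equiv.swap 1 2)) := by
    intro f
    rw [Finset.sum_insert (by decide), Finset.sum_insert (by decide), Finset.sum_singleton]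
  simp only [hs, D1, D2, D3, if_true, if_neg n12, if_neg n13, if_neg n23, if_neg n12.symm,
    if_neg n13.symm, if_neg n23.symm]
  generalize (if j 0 = j 1 ∧ j 2 = j 3 then (1 : ℝ) else 0) = x1 at *
  generalize (if j 0 = j 2 ∧ j 1 = j 3 then (1 : ℝ) else 0) = x2 at *
  generalize (if j 0 = j 3 ∧ j 1 = j 2 then (1 : ℝ) else 0) = x3 at *
  generalize (if i 0 = i 1 ∧ i 2 = i 3 then (1 : ℝ) else 0) = y1
  generalize (if i 0 = i 2 ∧ i 1 = i 3 then (1 : ℝ) else 0) = y2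
  generalize (if i 0 = i 3 ∧ i 1 = i 2 then (1 : ℝ) else 0) = y3
  have hd' : (2 : ℝ) ≤ d := by exact_mod_cast hd
  have hd0 : (d : ℝ) ≠ 0 := by linarith
  have hd1 : (d : ℝ) - 1 ≠ 0 := by linarith
  have hd2 : (d : ℝ) + 2 ≠ 0 := by linarith
  rw [← g1, ← g2, ← g3]
  field_simp
  ring
end

section
/- Let V be a standard complex Gaussian vector in ℂ^d, i.e. V(j) = X(j) + i·Y(j) where all X(j), Y(j), j ∈ Fin d, are independent real Gaussian random variables with mean 0 and variance 1/2. Then for every k and all index families i, i' : Fin k → Fin d, E[ ∏_{ℓ=1}^{k} v(i_ℓ) · ∏_{ℓ=1}^{k} conj(v(i'_ℓ)) ] = ∑_{α ∈ S_k} ∏_{ℓ=1}^{k} δ(i_ℓ, i'_{α(ℓ)}), where S_k is the symmetric group on k elements. -/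
open MeasureTheory ProbabilityTheory

/-- The law of a standard complex Gaussian vector in `ℂ^d`: each coordinate consists of a real and
an imaginary part, each real Gaussian of mean `0` and variance `1/2`, all jointly independent. -/
noncomputable def complexGaussianVec (d : ℕ) : Measure (Fin d → ℝ × ℝ) :=
  Measure.pi fun _ => (gaussianReal 0 (1 / 2)).prod (gaussianReal 0 (1 / 2))

/-- The `j`-th entry `v(j) = x(j) + i·y(j)` of the complex Gaussian vector. -/
noncomputable def cvecEntry {d : ℕ} (ω : Fin d → ℝ × ℝ) (j : Fin d) : ℂ :=
  ((ω j).1 : ℂ) + ((ω j).2 : ℂ) * Complex.I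

theorem aux_angle (a b : ℕ) :
    ∫ θ in Set.Ioo (-Real.pi) Real.pi,
      (Complex.exp (θ * Complex.I)) ^ a * (Complex.exp (-(θ * Complex.I))) ^ b
      = if a = b then (2 * Real.pi : ℂ) else 0 := by
  have h1 : ∀ θ : ℝ, (Complex.exp (θ * Complex.I)) ^ a * (Complex.exp (-(θ * Complex.I))) ^ b
      = Complex.exp ((((a : ℂ) - b) * Complex.I) * θ) := by
    intro θ
    rw [← Complex.exp_nat_mul, ← Complex.exp_nat_mul, ← Complex.exp_add]
    congr 1; ring
  simp_rw [h1]
  rw [← integral_Ioc_eq_integral_Ioo, ← intervalIntegral.integral_of_le (by linarith [Real.pi_pos])]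
  split_ifs with h
  · subst h
    simp
    ring
  · have hc : ((a : ℂ) - b) * Complex.I ≠ 0 := by
      simp [sub_eq_zero, h]
    rw [integral_exp_mul_complex hc]
    rw [div_eq_zero_iff]; left
    rw [sub_eq_zero, Complex.exp_eq_exp_iff_exists_int]
    refine ⟨(a : ℤ) - b, ?_⟩
    push_cast
    ring

theorem aux_radial (a : ℕ) :
    ∫ r in Set.Ioi (0 : ℝ), ((r ^ (2 * a + 1) * Real.exp (-r ^ 2) : ℝ) : ℂ)
      = (a.factorial : ℂ) / 2 := by
  rw [integral_complex_ofReal]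
  have h := integral_rpow_mul_exp_neg_rpow (p := 2) (q := ((2 * a + 1 : ℕ) : ℝ)) (by norm_num)
    (by have : (0 : ℝ) ≤ ((2 * a + 1 : ℕ) : ℝ) := by positivity
        linarith)
  simp only [Real.rpow_natCast, Real.rpow_two] at h
  rw [h]
  have : (((2 * a + 1 : ℕ) : ℝ) + 1) / 2 = a + 1 := by push_cast; ring
  rw [this, Real.Gamma_nat_eq_factorial]
  push_cast; ring

theorem aux_moment (a b : ℕ) :
    ∫ p : ℝ × ℝ, ((p.1 : ℂ) + (p.2 : ℂ) * Complex.I) ^ a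
        * ((starRingEnd ℂ) ((p.1 : ℂ) + (p.2 : ℂ) * Complex.I)) ^ b
        ∂((gaussianReal 0 (1 / 2)).prod (gaussianReal 0 (1 / 2)))
      = if a = b then (a.factorial : ℂ) else 0 := by
  have hv : (1 / 2 : NNReal) ≠ 0 := by norm_num
  rw [gaussianReal_of_var_ne_zero _ hv, prod_withDensity (measurable_gaussianPDF _ _)
    (measurable_gaussianPDF _ _), integral_withDensity_eq_integral_toReal_smul
      (by have := measurable_gaussianPDF 0 (1/2); fun_prop)
      (Filter.Eventually.of_forall fun p =>
        ENNReal.mul_lt_top gaussianPDF_lt_top gaussianPDF_lt_top)]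
  rw [← Measure.volume_eq_prod, ← integral_comp_polarCoord_symm]
  have hval : ∀ p : ℝ × ℝ, p.1 • ((gaussianPDF 0 (1 / 2) (polarCoord.symm p).1
        * gaussianPDF 0 (1 / 2) (polarCoord.symm p).2).toReal •
        ((((polarCoord.symm p).1 : ℂ) + ((polarCoord.symm p).2 : ℂ) * Complex.I) ^ a
        * ((starRingEnd ℂ) (((polarCoord.symm p).1 : ℂ)
          + ((polarCoord.symm p).2 : ℂ) * Complex.I)) ^ b))
      = (((Real.pi⁻¹ * (p.1 ^ (a + b + 1) * Real.exp (-p.1 ^ 2)) : ℝ)) : ℂ) *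
        ((Complex.exp (p.2 * Complex.I)) ^ a * (Complex.exp (-(p.2 * Complex.I))) ^ b) := by
    rintro ⟨r, θ⟩
    have hz : ((r * Real.cos θ : ℝ) : ℂ) + ((r * Real.sin θ : ℝ) : ℂ) * Complex.I
        = r * Complex.exp (θ * Complex.I) := by
      rw [Complex.exp_mul_I]; push_cast; ring
    have hd : (gaussianPDF 0 (1 / 2) (r * Real.cos θ)
        * gaussianPDF 0 (1 / 2) (r * Real.sin θ)).toReal = Real.pi⁻¹ * Real.exp (-r ^ 2) := by
      rw [ENNReal.toReal_mul, toReal_gaussianPDF, toReal_gaussianPDF, gaussianPDFReal,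
        gaussianPDFReal]
      have e1 : (2 * Real.pi * ((1 / 2 : NNReal) : ℝ)) = Real.pi := by push_cast; ring
      have e2 : (2 * ((1 / 2 : NNReal) : ℝ)) = 1 := by push_cast; ring
      rw [e1, e2, mul_mul_mul_comm, ← mul_inv, Real.mul_self_sqrt Real.pi_pos.le, ← Real.exp_add]
      congr 2
      have := Real.sin_sq_add_cos_sq θ
      linear_combination (-r ^ 2) * this
    have hconj : (starRingEnd ℂ) (r * Complex.exp (θ * Complex.I))
        = r * Complex.exp (-(θ * Complex.I)) := by
      rw [map_mul, ← Complex.exp_conj]; simp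
    simp only [polarCoord_symm_apply]
    rw [hd, hz, hconj]
    simp only [Complex.real_smul]
    push_cast
    ring
  simp_rw [hval]
  rw [polarCoord_target, Measure.volume_eq_prod, setIntegral_prod_mul
    (fun r : ℝ => (((Real.pi⁻¹ * (r ^ (a + b + 1) * Real.exp (-r ^ 2)) : ℝ)) : ℂ))
    (fun θ : ℝ => (Complex.exp (θ * Complex.I)) ^ a * (Complex.exp (-(θ * Complex.I))) ^ b),
    aux_angle]
  split_ifs with h
  · subst h
    have hr := aux_radial a
    simp only [Complex.ofReal_mul (Real.pi⁻¹)]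
    rw [integral_const_mul, ← two_mul, hr]
    have : (Real.pi : ℂ) ≠ 0 := by exact_mod_cast Real.pi_ne_zero
    push_cast
    field_simp
  · simp

theorem aux_comb {d k : ℕ} (i i' : Fin k → Fin d) :
    ∏ j, (if (Finset.univ.filter (fun l => i l = j)).card
        = (Finset.univ.filter (fun l => i' l = j)).card
      then (((Finset.univ.filter (fun l => i l = j)).card).factorial : ℂ) else 0)
      = ∑ α : Equiv.Perm (Fin k), ∏ ℓ, if i ℓ = i' (α ℓ) then (1 : ℂ) else 0 := by
  have hs : ∀ α : Equiv.Perm (Fin k), (∏ ℓ, if i ℓ = i' (α ℓ) then (1 : ℂ) else 0)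
      = if i' ∘ α = i then 1 else 0 := by
    intro α
    rw [Finset.prod_ite_zero]
    simp [funext_iff, eq_comm]
  simp_rw [hs]
  rw [Finset.sum_boole]
  by_cases hex : ∃ α : Equiv.Perm (Fin k), i' ∘ α = i
  · obtain ⟨α, hα⟩ := hex
    subst hα
    have hcard : ∀ j, (Finset.univ.filter (fun l => (i' ∘ α) l = j)).card
        = (Finset.univ.filter (fun l => i' l = j)).card := by
      intro j
      refine Finset.card_bij (fun l _ => α l) (by simp) (by simp) ?_
      intro l hl
      exact ⟨α.symm l, by simpa using hl, by simp⟩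
    simp_rw [hcard, if_true]
    have h2 := DomMulAct.stabilizer_card i'
    simp_rw [Fintype.card_subtype] at h2
    rw [← Nat.cast_prod, ← h2]
    congr 1
    symm
    refine Finset.card_bij (fun g _ => g * α⁻¹) ?_ (by simp) ?_
    · intro g hg
      simp only [Finset.mem_filter, Finset.mem_univ, true_and, funext_iff, Function.comp] at hg ⊢
      intro x
      simpa using hg (α⁻¹ x)
    · intro g hg
      simp only [Finset.mem_filter, Finset.mem_univ, true_and, funext_iff, Function.comp] at hg
      refine ⟨g * α, ?_, by simp⟩
      simp only [Finset.mem_filter, Finset.mem_univ, true_and, funext_iff, Function.comp]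
      intro x
      simpa using hg (α x)
  · have h0 : (Finset.univ.filter fun α : Equiv.Perm (Fin k) => i' ∘ α = i) = ∅ := by
      ext α; simpa using fun h => hex ⟨α, h⟩
    rw [h0, Finset.card_empty, Nat.cast_zero]
    by_contra hne
    rw [← ne_eq, Finset.prod_ne_zero_iff] at hne
    have hc : ∀ j, Nonempty ({l // i l = j} ≃ {l // i' l = j}) := by
      intro j
      have := hne j (Finset.mem_univ j)
      rw [← Fintype.card_eq, Fintype.card_subtype, Fintype.card_subtype]
      by_contra hx
      exact this (if_neg hx)
    exact hex ⟨Equiv.ofFiberEquiv fun j => (hc j).some,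
      funext fun l => Equiv.ofFiberEquiv_map _ l⟩

/-- Wick formula for a standard complex Gaussian vector:
`E[∏ v(iₗ) · ∏ conj(v(i'ₗ))] = ∑_{α ∈ S_k} ∏ δ(iₗ, i'_{α(ℓ)})`. -/
theorem complex_gaussian_vector_moment {d k : ℕ} (i i' : Fin k → Fin d) :
    ∫ ω : Fin d → ℝ × ℝ,
        (∏ ℓ, cvecEntry ω (i ℓ)) * (∏ ℓ, (starRingEnd ℂ) (cvecEntry ω (i' ℓ)))
        ∂(complexGaussianVec d)
      = ∑ α : Equiv.Perm (Fin k), ∏ ℓ, if i ℓ = i' (α ℓ) then (1 : ℂ) else 0 := by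
  have hf : ∀ (m : Fin k → Fin d) (f : Fin d → ℂ), ∏ ℓ, f (m ℓ)
      = ∏ j, f j ^ (Finset.univ.filter (fun l => m l = j)).card := by
    intro m f
    rw [← Finset.prod_fiberwise' Finset.univ m f]
    simp only [Finset.prod_const]
  have h1 : ∀ ω : Fin d → ℝ × ℝ, _ := fun ω => hf i (cvecEntry ω)
  have h2 : ∀ ω : Fin d → ℝ × ℝ, _ := fun ω => hf i' (fun j => (starRingEnd ℂ) (cvecEntry ω j))
  simp_rw [h1, h2]
  simp only [← Finset.prod_mul_distrib]
  rw [complexGaussianVec]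
  unfold cvecEntry
  rw [integral_fintype_prod_eq_prod (fun (j : Fin d) (p : ℝ × ℝ) =>
    ((p.1 : ℂ) + (p.2 : ℂ) * Complex.I) ^ (Finset.univ.filter (fun l => i l = j)).card
    * ((starRingEnd ℂ) ((p.1 : ℂ) + (p.2 : ℂ) * Complex.I))
      ^ (Finset.univ.filter (fun l => i' l = j)).card)]
  simp_rw [aux_moment]
  exact aux_comb i i'
end

section
/- Let d ≥ 2, let A, B, C be fixed d×d complex matrices, and let U be distributed according to the normalized Haar probability measure on U(d). Then, entrywise, E[ U A U* B U C U* ] = (1/(d²−1)) · ( trace(A) trace(C) · B + trace(AC) trace(B) · I ) − (1/(d(d²−1))) · ( trace(AC) · B + trace(A) trace(B) trace(C) · I ). -/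
open MeasureTheory Matrix

/-- Invariance of a 4-tensor under the unitary group. -/
def TInv {d : ℕ} (T : Fin d → Fin d → Fin d → Fin d → ℂ) : Prop :=
  ∀ V ∈ Matrix.unitaryGroup (Fin d) ℂ, ∀ a b c e, T a b c e =
    ∑ a', ∑ b', ∑ c', ∑ e', V a a' * star (V b b') * V c c' * star (V e e') * T a' b' c' e'

lemma TInv.diag {d : ℕ} {T : Fin d → Fin d → Fin d → Fin d → ℂ} (h : TInv T)
    (k a b c e : Fin d) :
    T a b c e = (if a = k then Complex.I else 1) * star (if b = k then Complex.I else 1) *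
      (if c = k then Complex.I else 1) * star (if e = k then Complex.I else 1) * T a b c e := by
  have hV : (Matrix.diagonal (fun a : Fin d => if a = k then Complex.I else 1)) ∈
      Matrix.unitaryGroup (Fin d) ℂ := by
    rw [Matrix.mem_unitaryGroup_iff, Matrix.star_eq_conjTranspose, Matrix.diagonal_conjTranspose,
      Matrix.diagonal_mul_diagonal, ← Matrix.diagonal_one]
    congr 1
    funext x
    by_cases hx : x = k <;> simp [hx]
  have := h _ hV a b c e
  conv_lhs => rw [this]
  rw [Finset.sum_eq_single a, Finset.sum_eq_single b, Finset.sum_eq_single c,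
    Finset.sum_eq_single e]
  · simp only [Matrix.diagonal_apply_eq]
  all_goals first
    | (intro x _ hx; simp [Matrix.diagonal_apply_ne' _ hx])
    | simp

lemma TInv.perm {d : ℕ} {T : Fin d → Fin d → Fin d → Fin d → ℂ} (h : TInv T)
    (σ : Equiv.Perm (Fin d)) (a b c e : Fin d) :
    T a b c e = T (σ a) (σ b) (σ c) (σ e) := by
  have hV : (Matrix.of (fun a b : Fin d => if σ a = b then (1 : ℂ) else 0)) ∈
      Matrix.unitaryGroup (Fin d) ℂ := by
    rw [Matrix.mem_unitaryGroup_iff]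
    ext x y
    simp [Matrix.mul_apply, Matrix.one_apply, eq_comm]
  have := h _ hV a b c e
  rw [this, Finset.sum_eq_single (σ a), Finset.sum_eq_single (σ b), Finset.sum_eq_single (σ c),
    Finset.sum_eq_single (σ e)]
  · simp
  all_goals first
    | (intro x _ hx; simp [hx.symm])
    | simp

lemma TInv.zero {d : ℕ} {T : Fin d → Fin d → Fin d → Fin d → ℂ} (h : TInv T)
    (a b c e : Fin d) (h1 : ¬ (a = b ∧ c = e)) (h2 : ¬ (a = e ∧ c = b)) : T a b c e = 0 := by
  have key : ∀ z : ℂ, z ≠ 1 → T a b c e = z * T a b c e → T a b c e = 0 := by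
    intro z hz hh
    have : (1 - z) * T a b c e = 0 := by linear_combination hh
    rcases mul_eq_zero.1 this with h | h
    · exact absurd (sub_eq_zero.1 h).symm hz
    · exact h
  by_cases hab : a = b
  · subst hab
    refine key _ ?_ (h.diag c a a c e)
    have hce : e ≠ c := fun hh => h1 ⟨rfl, hh.symm⟩
    by_cases hac : a = c <;> simp [hac, hce, Complex.ext_iff]
  · by_cases hae : a = e
    · subst hae
      refine key _ ?_ (h.diag c a b c a)
      have hcb : b ≠ c := fun hh => h2 ⟨rfl, hh.symm⟩
      by_cases hac : a = c <;> simp [hac, hcb, Complex.ext_iff]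
    · refine key _ ?_ (h.diag a a b c e)
      have hb : b ≠ a := fun hh => hab hh.symm
      have he : e ≠ a := fun hh => hae hh.symm
      by_cases hac : c = a <;> simp [hac, hb, he, Complex.ext_iff]
      norm_num

/-- Hadamard rotation in the plane of two coordinates. -/
noncomputable def hadV {d : ℕ} (s t : Fin d) (r : ℂ) : Matrix (Fin d) (Fin d) ℂ :=
  Matrix.of (fun a b => if a = s then (if b = s then r else 0) + (if b = t then r else 0)
    else if a = t then (if b = s then r else 0) - (if b = t then r else 0)
    else if b = a then 1 else 0)

lemma hadV_mem {d : ℕ} (s t : Fin d) (hst : s ≠ t) (r : ℂ) (hr : star r = r)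
    (hr2 : r * r = 1 / 2) : hadV s t r ∈ Matrix.unitaryGroup (Fin d) ℂ := by
  have hts := hst.symm
  have sumP : ∀ f : Fin d → ℂ,
      ∑ x, ((if x = s then r else 0) + (if x = t then r else 0)) * f x = r * f s + r * f t := by
    intro f; simp [add_mul, Finset.sum_add_distrib]
  have sumM : ∀ f : Fin d → ℂ,
      ∑ x, ((if x = s then r else 0) - (if x = t then r else 0)) * f x = r * f s - r * f t := by
    intro f; simp [sub_mul, Finset.sum_sub_distrib]
  have hs : ∀ x, hadV s t r s x = (if x = s then r else 0) + (if x = t then r else 0) := by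
    intro x; simp [hadV]
  have ht : ∀ x, hadV s t r t x = (if x = s then r else 0) - (if x = t then r else 0) := by
    intro x; simp [hadV, hst.symm]
  have ho : ∀ y, y ≠ s → y ≠ t → ∀ x, hadV s t r y x = if x = y then 1 else 0 := by
    intro y h1 h2 x; simp [hadV, h1, h2]
  have row : ∀ y, star (hadV s t r y s) = hadV s t r y s ∧
      star (hadV s t r y t) = hadV s t r y t := by
    intro y
    by_cases h1 : y = s
    · subst h1; rw [hs, hs]; simp [hst, hts]; exact hr
    by_cases h2 : y = t
    · subst h2; rw [ht, ht]; simp [hst, hts]; exact hr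
    rw [ho y h1 h2, ho y h1 h2]; simp [Ne.symm h1, Ne.symm h2]
  rw [Matrix.mem_unitaryGroup_iff]
  ext x y
  rw [Matrix.mul_apply]
  simp only [Matrix.star_apply]
  by_cases h1 : x = s
  · subst h1
    simp only [hs]
    rw [sumP, (row y).1, (row y).2]
    by_cases h3 : y = x
    · subst h3; rw [hs, hs]; simp [hst, hts, hr2]; norm_num
    by_cases h4 : y = t
    · subst h4; rw [ht, ht]; simp [hst, hts]
    rw [ho y h3 h4, ho y h3 h4]; simp [Ne.symm h3, Ne.symm h4]
  by_cases h2 : x = t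
  · subst h2
    simp only [ht]
    rw [sumM, (row y).1, (row y).2]
    by_cases h3 : y = s
    · subst h3; rw [hs, hs]; simp [hst, hts]
    by_cases h4 : y = x
    · subst h4; rw [ht, ht]; simp [hst, hts, hr2]; norm_num
    rw [ho y h3 h4, ho y h3 h4]; simp [Ne.symm h3, Ne.symm h4]
  simp only [ho x h1 h2, ite_mul, one_mul, zero_mul, Finset.sum_ite_eq', Finset.sum_ite_eq,
    Finset.mem_univ, if_true]
  by_cases h3 : y = s
  · subst h3; rw [hs]; simp [h1, h2]
  by_cases h4 : y = t
  · subst h4; rw [ht]; simp [h1, h2]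
  rw [ho y h3 h4]
  by_cases h5 : x = y <;> simp [h5, Matrix.one_apply]

lemma TInv.had {d : ℕ} {T : Fin d → Fin d → Fin d → Fin d → ℂ} (h : TInv T)
    (s t : Fin d) (hst : s ≠ t) : T s s s s = T s s t t + T s t t s := by
  obtain ⟨r, hr, hr2⟩ : ∃ r : ℂ, star r = r ∧ r * r = 1 / 2 := by
    refine ⟨((√(1/2) : ℝ) : ℂ), Complex.conj_ofReal _, ?_⟩
    rw [← Complex.ofReal_mul, Real.mul_self_sqrt (by norm_num)]
    norm_num
  have hr' : (starRingEnd ℂ) r = r := hr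
  have e := h _ (hadV_mem s t hst r hr hr2) s s t t
  have hs : ∀ x, hadV s t r s x = (if x = s then r else 0) + (if x = t then r else 0) := by
    intro x; simp [hadV]
  have ht : ∀ x, hadV s t r t x = (if x = s then r else 0) - (if x = t then r else 0) := by
    intro x; simp [hadV, hst.symm]
  have h4 : r * r * r * r = 1 / 4 := by
    rw [mul_assoc, hr2]; norm_num
  have sumP : ∀ f : Fin d → ℂ,
      ∑ x, ((if x = s then r else 0) + (if x = t then r else 0)) * f x = r * f s + r * f t := by
    intro f; simp [add_mul, Finset.sum_add_distrib]
  have sumM : ∀ f : Fin d → ℂ,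
      ∑ x, ((if x = s then r else 0) - (if x = t then r else 0)) * f x = r * f s - r * f t := by
    intro f; simp [sub_mul, Finset.sum_sub_distrib]
  simp only [hs, ht, star_add, star_sub, apply_ite star, hr, star_zero, mul_assoc,
    ← Finset.mul_sum, sumP, sumM] at e
  have z := h.zero
  have hts := hst.symm
  rw [z s s s t (by simp [hst]) (by simp [hst]), z s s t s (by simp [hts]) (by simp [hts]),
    z s t s s (by simp [hst]) (by simp [hst]), z s t s t (by simp [hst]) (by simp [hst]),
    z s t t t (by simp [hst]) (by simp [hst]), z t s s s (by simp [hts]) (by simp [hts]),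
    z t s t s (by simp [hts]) (by simp [hts]), z t s t t (by simp [hts]) (by simp [hts]),
    z t t s t (by simp [hst]) (by simp [hst]), z t t t s (by simp [hts]) (by simp [hts])] at e
  have p1 := h.perm (Equiv.swap s t) t t t t
  have p2 := h.perm (Equiv.swap s t) t t s s
  have p3 := h.perm (Equiv.swap s t) t s s t
  simp only [Equiv.swap_apply_left, Equiv.swap_apply_right] at p1 p2 p3
  rw [p1, p2, p3] at e
  linear_combination (-2 : ℂ) * e - (4 * T s s s s + 4 * T s s t t - 4 * T s t t s) * h4

lemma perm2 {d : ℕ} (a c s t : Fin d) (hac : a ≠ c) (hst : s ≠ t) :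
    ∃ σ : Equiv.Perm (Fin d), σ a = s ∧ σ c = t := by
  refine ⟨Equiv.swap (Equiv.swap a s c) t * Equiv.swap a s, ?_, by simp⟩
  simp only [Equiv.Perm.mul_apply, Equiv.swap_apply_left]
  refine Equiv.swap_apply_of_ne_of_ne ?_ hst
  intro hh
  apply hac
  apply (Equiv.swap a s).injective
  rw [← hh]; simp

lemma TInv.form {d : ℕ} (hd : 2 ≤ d) {T : Fin d → Fin d → Fin d → Fin d → ℂ} (h : TInv T) :
    ∃ p q : ℂ, ∀ a b c e, T a b c e =
      p * ((if a = b then 1 else 0) * (if c = e then 1 else 0)) +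
      q * ((if a = e then 1 else 0) * (if c = b then 1 else 0)) := by
  obtain ⟨s, t, hst⟩ : ∃ s t : Fin d, s ≠ t :=
    ⟨⟨0, by omega⟩, ⟨1, by omega⟩, by simp⟩
  refine ⟨T s s t t, T s t t s, fun a b c e => ?_⟩
  by_cases h1 : a = b ∧ c = e
  · obtain ⟨rfl, rfl⟩ := h1
    by_cases hac : a = c
    · subst hac
      have := h.perm (Equiv.swap a s) a a a a
      simp only [Equiv.swap_apply_left] at this
      rw [this, h.had s t hst]; simp
    · obtain ⟨σ, h1, h2⟩ := perm2 a c s t hac hst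
      have := h.perm σ a a c c
      rw [h1, h2] at this
      rw [this]; simp [hac]
  · by_cases h2 : a = e ∧ c = b
    · obtain ⟨rfl, rfl⟩ := h2
      have hac : a ≠ c := fun hh => h1 ⟨hh, hh.symm⟩
      obtain ⟨σ, h1, h2⟩ := perm2 a c s t hac hst
      have := h.perm σ a c c a
      rw [h1, h2] at this
      rw [this]; simp [hac]
    · rw [h.zero a b c e h1 h2]
      have e1 : ((if a = b then 1 else 0) * (if c = e then 1 else 0) : ℂ) = 0 := by
        by_cases x : a = b <;> by_cases y : c = e <;> simp_all
      have e2 : ((if a = e then 1 else 0) * (if c = b then 1 else 0) : ℂ) = 0 := by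
        by_cases x : a = e <;> by_cases y : c = b <;> simp_all
      rw [e1, e2]; simp

lemma conj_entry_cont {d : ℕ} (A : Matrix (Fin d) (Fin d) ℂ) (a b : Fin d) :
    Continuous (fun U : Matrix.unitaryGroup (Fin d) ℂ =>
      ((U : Matrix (Fin d) (Fin d) ℂ) * A * star (U : Matrix (Fin d) (Fin d) ℂ)) a b) := by
  have : Continuous (fun U : Matrix.unitaryGroup (Fin d) ℂ =>
      ((U : Matrix (Fin d) (Fin d) ℂ) * A * star (U : Matrix (Fin d) (Fin d) ℂ))) := by
    fun_prop
  exact this.matrix_elem a b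

lemma conj_entry_bound {d : ℕ} (A : Matrix (Fin d) (Fin d) ℂ) (a b : Fin d)
    (U : Matrix.unitaryGroup (Fin d) ℂ) :
    ‖((U : Matrix (Fin d) (Fin d) ℂ) * A * star (U : Matrix (Fin d) (Fin d) ℂ)) a b‖ ≤
      ∑ y : Fin d, ∑ x : Fin d, ‖A x y‖ := by
  simp only [Matrix.mul_apply, Matrix.star_apply]
  refine (norm_sum_le _ _).trans (Finset.sum_le_sum fun y _ => ?_)
  rw [norm_mul, norm_star]
  have h1 := entry_norm_bound_of_unitary U.2 b y
  refine (mul_le_of_le_one_right (norm_nonneg _) h1).trans ?_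
  refine (norm_sum_le _ _).trans (Finset.sum_le_sum fun x _ => ?_)
  rw [norm_mul]
  exact mul_le_of_le_one_left (norm_nonneg _) (entry_norm_bound_of_unitary U.2 a x)

lemma conj_int {d : ℕ} (A C : Matrix (Fin d) (Fin d) ℂ)
    (μ : Measure (Matrix.unitaryGroup (Fin d) ℂ)) [IsProbabilityMeasure μ] (a b c e : Fin d) :
    Integrable (fun U : Matrix.unitaryGroup (Fin d) ℂ =>
      ((U : Matrix (Fin d) (Fin d) ℂ) * A * star (U : Matrix (Fin d) (Fin d) ℂ)) a b *
      ((U : Matrix (Fin d) (Fin d) ℂ) * C * star (U : Matrix (Fin d) (Fin d) ℂ)) c e) μ := by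
  refine Integrable.of_bound
    ((conj_entry_cont A a b).mul (conj_entry_cont C c e)).aestronglyMeasurable
    ((∑ y : Fin d, ∑ x : Fin d, ‖A x y‖) * (∑ y : Fin d, ∑ x : Fin d, ‖C x y‖))
    (Filter.Eventually.of_forall fun U => ?_)
  rw [norm_mul]
  exact mul_le_mul (conj_entry_bound A a b U) (conj_entry_bound C c e U) (norm_nonneg _)
    (by positivity)

lemma sandwich_apply {d : ℕ} (V X : Matrix (Fin d) (Fin d) ℂ) (a b : Fin d) :
    (V * X * star V) a b = ∑ a', ∑ b', V a a' * star (V b b') * X a' b' := by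
  simp only [Matrix.mul_apply, Matrix.star_apply, Finset.sum_mul]
  rw [Finset.sum_comm]
  exact Finset.sum_congr rfl fun _ _ => Finset.sum_congr rfl fun _ _ => by ring

/-- The second moment tensor. -/
noncomputable def secMom {d : ℕ} (A C : Matrix (Fin d) (Fin d) ℂ)
    (μ : Measure (Matrix.unitaryGroup (Fin d) ℂ)) (a b c e : Fin d) : ℂ :=
  ∫ U : Matrix.unitaryGroup (Fin d) ℂ,
      ((U : Matrix (Fin d) (Fin d) ℂ) * A * star (U : Matrix (Fin d) (Fin d) ℂ)) a b *
      ((U : Matrix (Fin d) (Fin d) ℂ) * C * star (U : Matrix (Fin d) (Fin d) ℂ)) c e ∂μ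

/-- A linear combination of second moments is an integral. -/
lemma secMom_inv {d : ℕ} (A C : Matrix (Fin d) (Fin d) ℂ)
    (μ : Measure (Matrix.unitaryGroup (Fin d) ℂ)) [μ.IsHaarMeasure] [IsProbabilityMeasure μ] :
    TInv (secMom A C μ) := by
  intro V hV a b c e
  have hi := conj_int A C μ
  have h1 : secMom A C μ a b c e = ∫ U : Matrix.unitaryGroup (Fin d) ℂ,
      ∑ a', ∑ b', ∑ c', ∑ e', V a a' * star (V b b') * V c c' * star (V e e') *
      (((U : Matrix (Fin d) (Fin d) ℂ) * A * star (U : Matrix (Fin d) (Fin d) ℂ)) a' b' *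
      ((U : Matrix (Fin d) (Fin d) ℂ) * C * star (U : Matrix (Fin d) (Fin d) ℂ)) c' e') ∂μ := by
    rw [secMom, ← integral_mul_left_eq_self _ (⟨V, hV⟩ : Matrix.unitaryGroup (Fin d) ℂ)]
    refine integral_congr_ae (Filter.Eventually.of_forall fun U => ?_)
    have hX : ∀ X : Matrix (Fin d) (Fin d) ℂ,
        (((⟨V, hV⟩ * U : Matrix.unitaryGroup (Fin d) ℂ) : Matrix (Fin d) (Fin d) ℂ) * X *
          star ((⟨V, hV⟩ * U : Matrix.unitaryGroup (Fin d) ℂ) : Matrix (Fin d) (Fin d) ℂ)) =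
        V * ((U : Matrix (Fin d) (Fin d) ℂ) * X * star (U : Matrix (Fin d) (Fin d) ℂ)) *
          star V := by
      intro X
      rw [Submonoid.coe_mul, star_mul]
      simp only [Matrix.mul_assoc]
    simp only [hX]
    rw [sandwich_apply V, sandwich_apply V]
    simp only [Finset.sum_mul]
    refine Finset.sum_congr rfl fun _ _ => Finset.sum_congr rfl fun _ _ => ?_
    simp only [Finset.mul_sum]
    refine Finset.sum_congr rfl fun _ _ => Finset.sum_congr rfl fun _ _ => by ring
  rw [h1, integral_finsetSum _ fun a' _ => integrable_finsetSum _ fun b' _ =>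
    integrable_finsetSum _ fun c' _ => integrable_finsetSum _ fun e' _ => (hi a' b' c' e').const_mul _]
  refine Finset.sum_congr rfl fun a' _ => ?_
  rw [integral_finsetSum _ fun b' _ =>
    integrable_finsetSum _ fun c' _ => integrable_finsetSum _ fun e' _ => (hi a' b' c' e').const_mul _]
  refine Finset.sum_congr rfl fun b' _ => ?_
  rw [integral_finsetSum _ fun c' _ =>
    integrable_finsetSum _ fun e' _ => (hi a' b' c' e').const_mul _]
  refine Finset.sum_congr rfl fun c' _ => ?_
  rw [integral_finsetSum _ fun e' _ => (hi a' b' c' e').const_mul _]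
  refine Finset.sum_congr rfl fun e' _ => ?_
  rw [integral_const_mul, secMom]

lemma trace_conj {d : ℕ} (X : Matrix (Fin d) (Fin d) ℂ) (U : Matrix.unitaryGroup (Fin d) ℂ) :
    ((U : Matrix (Fin d) (Fin d) ℂ) * X * star (U : Matrix (Fin d) (Fin d) ℂ)).trace = X.trace := by
  rw [Matrix.trace_mul_comm, ← Matrix.mul_assoc, Matrix.UnitaryGroup.star_mul_self, Matrix.one_mul]

lemma secMom_tr1 {d : ℕ} (A C : Matrix (Fin d) (Fin d) ℂ)
    (μ : Measure (Matrix.unitaryGroup (Fin d) ℂ)) [IsProbabilityMeasure μ] :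
    ∑ a, ∑ c, secMom A C μ a a c c = A.trace * C.trace := by
  have hi := conj_int A C μ
  unfold secMom
  calc _ = ∑ a, ∫ U : Matrix.unitaryGroup (Fin d) ℂ, ∑ c,
      ((U : Matrix (Fin d) (Fin d) ℂ) * A * star (U : Matrix (Fin d) (Fin d) ℂ)) a a *
      ((U : Matrix (Fin d) (Fin d) ℂ) * C * star (U : Matrix (Fin d) (Fin d) ℂ)) c c ∂μ :=
        Finset.sum_congr rfl fun a _ => (integral_finsetSum _ fun c _ => hi a a c c).symm
    _ = ∫ U : Matrix.unitaryGroup (Fin d) ℂ, ∑ a, ∑ c,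
      ((U : Matrix (Fin d) (Fin d) ℂ) * A * star (U : Matrix (Fin d) (Fin d) ℂ)) a a *
      ((U : Matrix (Fin d) (Fin d) ℂ) * C * star (U : Matrix (Fin d) (Fin d) ℂ)) c c ∂μ :=
        (integral_finsetSum _ fun a _ => integrable_finsetSum _ fun c _ => hi a a c c).symm
    _ = ∫ U : Matrix.unitaryGroup (Fin d) ℂ, A.trace * C.trace ∂μ := by
        refine integral_congr_ae (Filter.Eventually.of_forall fun U => ?_)
        simp only
        rw [← trace_conj A U, ← trace_conj C U, Matrix.trace, Matrix.trace, Finset.sum_mul_sum]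
        rfl
    _ = _ := by simp

lemma secMom_sandwich {d : ℕ} (A B C : Matrix (Fin d) (Fin d) ℂ)
    (μ : Measure (Matrix.unitaryGroup (Fin d) ℂ)) [IsProbabilityMeasure μ] (i i' : Fin d) :
    ∫ U : Matrix.unitaryGroup (Fin d) ℂ,
        ((U : Matrix (Fin d) (Fin d) ℂ) * A * star (U : Matrix (Fin d) (Fin d) ℂ) * B *
          (U : Matrix (Fin d) (Fin d) ℂ) * C * star (U : Matrix (Fin d) (Fin d) ℂ)) i i' ∂μ
      = ∑ c, ∑ b, B b c * secMom A C μ i b c i' := by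
  have hi := conj_int A C μ
  unfold secMom
  simp only [← integral_const_mul]
  symm
  calc _ = ∑ c, ∫ U : Matrix.unitaryGroup (Fin d) ℂ, ∑ b, B b c *
      (((U : Matrix (Fin d) (Fin d) ℂ) * A * star (U : Matrix (Fin d) (Fin d) ℂ)) i b *
      ((U : Matrix (Fin d) (Fin d) ℂ) * C * star (U : Matrix (Fin d) (Fin d) ℂ)) c i') ∂μ :=
        Finset.sum_congr rfl fun c _ =>
          (integral_finsetSum _ fun b _ => (hi i b c i').const_mul _).symm
    _ = ∫ U : Matrix.unitaryGroup (Fin d) ℂ, ∑ c, ∑ b, B b c *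
      (((U : Matrix (Fin d) (Fin d) ℂ) * A * star (U : Matrix (Fin d) (Fin d) ℂ)) i b *
      ((U : Matrix (Fin d) (Fin d) ℂ) * C * star (U : Matrix (Fin d) (Fin d) ℂ)) c i') ∂μ :=
        (integral_finsetSum _ fun c _ => integrable_finsetSum _ fun b _ =>
          (hi i b c i').const_mul _).symm
    _ = _ := by
        refine integral_congr_ae (Filter.Eventually.of_forall fun U => ?_)
        have : ((U : Matrix (Fin d) (Fin d) ℂ) * A * star (U : Matrix (Fin d) (Fin d) ℂ) * B *
          (U : Matrix (Fin d) (Fin d) ℂ) * C * star (U : Matrix (Fin d) (Fin d) ℂ)) =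
          ((U : Matrix (Fin d) (Fin d) ℂ) * A * star (U : Matrix (Fin d) (Fin d) ℂ)) * B *
          ((U : Matrix (Fin d) (Fin d) ℂ) * C * star (U : Matrix (Fin d) (Fin d) ℂ)) := by
          simp only [Matrix.mul_assoc]
        simp only
        rw [this, Matrix.mul_apply]
        refine Finset.sum_congr rfl fun c _ => ?_
        rw [Matrix.mul_apply (M := _ * star _) (N := B), Finset.sum_mul]
        exact Finset.sum_congr rfl fun b _ => by ring

lemma secMom_tr2 {d : ℕ} (A C : Matrix (Fin d) (Fin d) ℂ)
    (μ : Measure (Matrix.unitaryGroup (Fin d) ℂ)) [IsProbabilityMeasure μ] :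
    ∑ a, ∑ c, secMom A C μ a c c a = (A * C).trace := by
  have hi := conj_int A C μ
  unfold secMom
  calc _ = ∑ a, ∫ U : Matrix.unitaryGroup (Fin d) ℂ, ∑ c,
      ((U : Matrix (Fin d) (Fin d) ℂ) * A * star (U : Matrix (Fin d) (Fin d) ℂ)) a c *
      ((U : Matrix (Fin d) (Fin d) ℂ) * C * star (U : Matrix (Fin d) (Fin d) ℂ)) c a ∂μ :=
        Finset.sum_congr rfl fun a _ => (integral_finsetSum _ fun c _ => hi a c c a).symm
    _ = ∫ U : Matrix.unitaryGroup (Fin d) ℂ, ∑ a, ∑ c,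
      ((U : Matrix (Fin d) (Fin d) ℂ) * A * star (U : Matrix (Fin d) (Fin d) ℂ)) a c *
      ((U : Matrix (Fin d) (Fin d) ℂ) * C * star (U : Matrix (Fin d) (Fin d) ℂ)) c a ∂μ :=
        (integral_finsetSum _ fun a _ => integrable_finsetSum _ fun c _ => hi a c c a).symm
    _ = ∫ U : Matrix.unitaryGroup (Fin d) ℂ, (A * C).trace ∂μ := by
        refine integral_congr_ae (Filter.Eventually.of_forall fun U => ?_)
        simp only [← Matrix.mul_apply]
        have : ((U : Matrix (Fin d) (Fin d) ℂ) * A * star (U : Matrix (Fin d) (Fin d) ℂ)) *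
          ((U : Matrix (Fin d) (Fin d) ℂ) * C * star (U : Matrix (Fin d) (Fin d) ℂ)) =
          (U : Matrix (Fin d) (Fin d) ℂ) * (A * C) * star (U : Matrix (Fin d) (Fin d) ℂ) := by
          calc _ = (U : Matrix (Fin d) (Fin d) ℂ) * A *
              (star (U : Matrix (Fin d) (Fin d) ℂ) * (U : Matrix (Fin d) (Fin d) ℂ)) * C *
              star (U : Matrix (Fin d) (Fin d) ℂ) := by simp only [Matrix.mul_assoc]
            _ = _ := by
              rw [Matrix.UnitaryGroup.star_mul_self, Matrix.mul_one]
              simp only [Matrix.mul_assoc]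
        rw [this]
        exact trace_conj (A * C) U
    _ = _ := by simp

/-- For Haar-distributed `U` on `U(d)` with `d ≥ 2` and fixed matrices `A`, `B`, `C`,
`E[U A U* B U C U*] = (tr A tr C · B + tr(AC) tr B · I)/(d²−1)
− (tr(AC) · B + tr A tr B tr C · I)/(d(d²−1))`, entrywise. -/
theorem unitary_haar_second_order_expectation {d : ℕ} (hd : 2 ≤ d)
    (A B C : Matrix (Fin d) (Fin d) ℂ)
    (μ : Measure (Matrix.unitaryGroup (Fin d) ℂ)) [μ.IsHaarMeasure] [IsProbabilityMeasure μ]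
    (i i' : Fin d) :
    ∫ U : Matrix.unitaryGroup (Fin d) ℂ,
        ((U : Matrix (Fin d) (Fin d) ℂ) * A * star (U : Matrix (Fin d) (Fin d) ℂ) * B *
          (U : Matrix (Fin d) (Fin d) ℂ) * C * star (U : Matrix (Fin d) (Fin d) ℂ)) i i' ∂μ
      = (1 / ((d : ℂ) ^ 2 - 1)) *
          (A.trace * C.trace * B i i' +
            (A * C).trace * B.trace * (1 : Matrix (Fin d) (Fin d) ℂ) i i')
        - (1 / ((d : ℂ) * ((d : ℂ) ^ 2 - 1))) *
          ((A * C).trace * B i i' +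
            A.trace * B.trace * C.trace * (1 : Matrix (Fin d) (Fin d) ℂ) i i') := by
  rw [secMom_sandwich]
  have t1 := secMom_tr1 A C μ
  have t2 := secMom_tr2 A C μ
  obtain ⟨p, q, hT⟩ := (secMom_inv A C μ).form hd
  simp only [hT] at t1 t2 ⊢
  have s1 : (d : ℂ) ^ 2 * p + d * q = A.trace * C.trace := by
    rw [← t1]; simp [Finset.sum_add_distrib]; ring
  have s2 : (d : ℂ) * p + d ^ 2 * q = (A * C).trace := by
    rw [← t2]; simp [Finset.sum_add_distrib]; ring
  have s3 : (∑ c, ∑ b, B b c * (p * ((if i = b then 1 else 0) * (if c = i' then 1 else 0)) +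
      q * ((if i = i' then 1 else 0) * (if c = b then 1 else 0)))) =
      p * B i i' + q * B.trace * (1 : Matrix (Fin d) (Fin d) ℂ) i i' := by
    simp [mul_add, Finset.sum_add_distrib, Matrix.one_apply, Matrix.trace]
    by_cases hii : i = i' <;> simp [hii, Finset.mul_sum, mul_comm]
  rw [s3, mul_right_comm A.trace B.trace, ← s1, ← s2]
  have hd0 : (d : ℂ) ≠ 0 := by
    have : d ≠ 0 := by omega
    exact_mod_cast this
  have hd1 : (d : ℂ) ^ 2 - 1 ≠ 0 := by
    have : d ^ 2 ≠ 1 := by nlinarith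
    rw [sub_ne_zero]
    exact_mod_cast this
  field_simp
  ring
end

section
/- Let d ≥ 2, let A, B, C be fixed d×d real matrices, and let M be distributed according to the normalized Haar probability measure on O(d). Then, entrywise, E[ M A Mᵀ B M C Mᵀ ] = ((d+1)/(d(d−1)(d+2))) · ( trace(A) trace(C) · B + trace(AC) trace(B) · I + trace(ACᵀ) · Bᵀ ) − (1/(d(d−1)(d+2))) · ( trace(AC) · B + trace(A) trace(B) trace(C) · I + trace(ACᵀ) · B + trace(ACᵀ) trace(B) · I + trace(A) trace(C) · Bᵀ + trace(AC) · Bᵀ ). -/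
open MeasureTheory Matrix

section helpers

variable {d : ℕ}

local notation "𝕄" => Matrix (Fin d) (Fin d) ℝ
local notation "𝕆" => Matrix.orthogonalGroup (Fin d) ℝ

/-- Conjugation of `A` by `M`. -/
def cj (A : Matrix (Fin d) (Fin d) ℝ) (M : Matrix.orthogonalGroup (Fin d) ℝ) :
    Matrix (Fin d) (Fin d) ℝ :=
  (M : Matrix (Fin d) (Fin d) ℝ) * A * (M : Matrix (Fin d) (Fin d) ℝ)ᵀ

lemma continuous_cj (A : 𝕄) (i j : Fin d) : Continuous fun M : 𝕆 => cj A M i j := by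
  have h : Continuous fun M : 𝕆 => cj A M := by
    unfold cj
    have h0 : Continuous fun M : 𝕆 => (M : 𝕄) := continuous_subtype_val
    exact (h0.matrix_mul continuous_const).matrix_mul h0.matrix_transpose
  exact h.matrix_elem i j

lemma tr_mul_self (M : 𝕆) : (M : 𝕄)ᵀ * (M : 𝕄) = 1 := by
  have := (Matrix.mem_orthogonalGroup_iff' (Fin d) ℝ).1 M.2
  simpa [Matrix.star_eq_conjTranspose] using this

lemma entry_bound (M : 𝕆) (i j : Fin d) : |(M : 𝕄) i j| ≤ 1 := by
  have := entry_norm_bound_of_unitary (𝕜 := ℝ) (U := (M : 𝕄)) M.2 i j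
  simpa using this

lemma bound_cj (A : 𝕄) (i j : Fin d) (M : 𝕆) :
    |cj A M i j| ≤ ∑ l, ∑ k, |A k l| := by
  unfold cj
  rw [Matrix.mul_apply]
  refine (Finset.abs_sum_le_sum_abs _ _).trans (Finset.sum_le_sum fun l _ => ?_)
  rw [abs_mul]
  refine (mul_le_of_le_one_right (abs_nonneg _) (by simpa using entry_bound M j l)).trans ?_
  rw [Matrix.mul_apply]
  refine (Finset.abs_sum_le_sum_abs _ _).trans (Finset.sum_le_sum fun k _ => ?_)
  rw [abs_mul]
  exact mul_le_of_le_one_left (abs_nonneg _) (entry_bound M i k)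

variable (μ : Measure (Matrix.orthogonalGroup (Fin d) ℝ)) 

lemma integrable_cj [IsProbabilityMeasure μ] (A C : 𝕄) (i j k l : Fin d) :
    Integrable (fun M : 𝕆 => cj A M i j * cj C M k l) μ := by
  refine Integrable.of_bound
    (((continuous_cj A i j).mul (continuous_cj C k l)).aestronglyMeasurable)
    ((∑ l, ∑ k, |A k l|) * (∑ l, ∑ k, |C k l|)) (Filter.Eventually.of_forall fun M => ?_)
  rw [Real.norm_eq_abs, abs_mul]
  exact mul_le_mul (bound_cj A i j M) (bound_cj C k l M) (abs_nonneg _)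
    ((abs_nonneg _).trans (bound_cj A i j M))

/-- The fourth-order tensor. -/
noncomputable def TT (A C : Matrix (Fin d) (Fin d) ℝ) (i j k l : Fin d) : ℝ :=
  ∫ M, cj A M i j * cj C M k l ∂μ

lemma cj_mul (A : 𝕄) (R M : 𝕆) : cj A (R * M) = (R : 𝕄) * cj A M * (R : 𝕄)ᵀ := by
  simp [cj, Matrix.mul_assoc, Matrix.transpose_mul]

lemma TT_inv [μ.IsHaarMeasure] (A C : 𝕄) (i j k l : Fin d) (R : 𝕆) :
    TT μ A C i j k l = ∫ M, ((R : 𝕄) * cj A M * (R : 𝕄)ᵀ) i j *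
      ((R : 𝕄) * cj C M * (R : 𝕄)ᵀ) k l ∂μ := by
  unfold TT
  rw [← integral_mul_left_eq_self _ R]
  simp only [cj_mul]

lemma TT_sign [μ.IsHaarMeasure] (A C : 𝕄) (i j k l : Fin d) (e : Fin d → ℝ)
    (he : ∀ i, e i * e i = 1) :
    TT μ A C i j k l = e i * e j * e k * e l * TT μ A C i j k l := by
  have hR : Matrix.diagonal e ∈ Matrix.orthogonalGroup (Fin d) ℝ := by
    rw [Matrix.mem_orthogonalGroup_iff]
    simp [Matrix.star_eq_conjTranspose, Matrix.diagonal_mul_diagonal, he]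
  conv_lhs => rw [TT_inv μ A C i j k l ⟨_, hR⟩]
  unfold TT
  rw [← integral_const_mul]
  congr 1
  ext M
  simp [Matrix.diagonal_mul, Matrix.mul_diagonal]
  ring

lemma TT_perm [μ.IsHaarMeasure] (A C : 𝕄) (i j k l : Fin d) (σ : Equiv.Perm (Fin d)) :
    TT μ A C i j k l = TT μ A C (σ i) (σ j) (σ k) (σ l) := by
  have hR : (1 : 𝕄).submatrix σ id ∈ Matrix.orthogonalGroup (Fin d) ℝ := by
    rw [Matrix.mem_orthogonalGroup_iff]
    ext a b
    simp [Matrix.star_eq_conjTranspose, Matrix.mul_apply, Matrix.one_apply]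
  have key : ∀ X : 𝕄, ∀ a b,
      ((1 : 𝕄).submatrix σ id * X * ((1 : 𝕄).submatrix σ id)ᵀ) a b = X (σ a) (σ b) := by
    intro X a b
    simp [Matrix.mul_apply, Matrix.one_apply]
  rw [TT_inv μ A C i j k l ⟨_, hR⟩]
  simp only [key]
  rfl

lemma TT_zero [μ.IsHaarMeasure] (A C : 𝕄) (i j k l q : Fin d)
    (h : (if i = q then (-1 : ℝ) else 1) * (if j = q then -1 else 1) *
      (if k = q then -1 else 1) * (if l = q then -1 else 1) = -1) :
    TT μ A C i j k l = 0 := by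
  have := TT_sign μ A C i j k l (fun i => if i = q then (-1 : ℝ) else 1)
    (fun i => by split_ifs <;> norm_num)
  simp only [h] at this
  linarith

lemma bilin [IsProbabilityMeasure μ] (A C : 𝕄) (a : Fin 4 → ℝ) (r s : Fin 4 → Fin d) :
    ∫ M, (∑ x, a x * cj A M (r x) (s x)) * (∑ y, a y * cj C M (r y) (s y)) ∂μ
      = ∑ x, ∑ y, a x * a y * TT μ A C (r x) (s x) (r y) (s y) := by
  have hI := integrable_cj μ A C
  unfold TT
  simp_rw [← integral_const_mul]
  simp_rw [← integral_finsetSum Finset.univ (fun _ _ => (hI _ _ _ _).const_mul _)]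
  rw [← integral_finsetSum Finset.univ
    (fun _ _ => integrable_finsetSum _ (fun _ _ => (hI _ _ _ _).const_mul _))]
  congr 1
  ext M
  rw [Finset.sum_mul_sum]
  refine Finset.sum_congr rfl fun x _ => Finset.sum_congr rfl fun y _ => ?_
  ring

lemma TT_rot [μ.IsHaarMeasure] [IsProbabilityMeasure μ] (A C : 𝕄) (p q : Fin d) (hpq : p ≠ q) :
    TT μ A C p p p p = TT μ A C p p q q + TT μ A C p q p q + TT μ A C p q q p := by
  set v : Fin d → ℝ := Pi.single p (3/5) + Pi.single q (4/5) with hv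
  have hvv : v ⬝ᵥ v = 1 := by
    simp [hv, hpq, hpq.symm]
    norm_num
  set R : 𝕄 := 1 - (2 : ℝ) • Matrix.vecMulVec v v with hRdef
  have hRt : Rᵀ = R := by
    simp [hRdef, Matrix.transpose_vecMulVec]
  have hR : R ∈ Matrix.orthogonalGroup (Fin d) ℝ := by
    rw [Matrix.mem_orthogonalGroup_iff]
    have : star R = R := by
      simpa [Matrix.star_eq_conjTranspose] using hRt
    change R * star R = 1
    rw [this, hRdef, sub_mul, mul_sub, mul_sub]
    simp [Matrix.vecMulVec_mul_vecMulVec, hvv]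
    module
  have hrow : ∀ j, R p j = (Pi.single p (7/25) + Pi.single q (-24/25) : Fin d → ℝ) j := by
    intro j
    simp only [hRdef, hv, Matrix.sub_apply, Matrix.smul_apply, Matrix.vecMulVec_apply,
      Matrix.one_apply, Pi.add_apply, Pi.single_apply, smul_eq_mul]
    by_cases h1 : j = p
    · subst h1
      simp [hpq]; norm_num
    · by_cases h2 : j = q
      · subst h2
        simp [hpq, hpq.symm]; norm_num
      · simp [h1, h2, Ne.symm h1]
  have key : ∀ X : 𝕄, (R * X * Rᵀ) p p =
      (7/25)^2 * X p p + (7/25)*(-24/25) * X p q + (7/25)*(-24/25) * X q p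
        + (-24/25)^2 * X q q := by
    intro X
    simp only [Matrix.mul_apply, Matrix.transpose_apply, hrow, Pi.add_apply, add_mul, mul_add,
      Finset.sum_add_distrib, Pi.single_apply, ite_mul, mul_ite, zero_mul, mul_zero,
      Finset.sum_ite_eq', Finset.mem_univ, if_true]
    ring
  have h := TT_inv μ A C p p p p ⟨R, hR⟩
  simp only [key] at h
  have hI := integrable_cj μ A C
  have h2 : TT μ A C p p p p =
      (7/25)^4 * TT μ A C p p p p + (-24/25)^4 * TT μ A C q q q q
      + (7/25)^2*(-24/25)^2 * (TT μ A C p p q q + TT μ A C q q p p + TT μ A C p q p q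
        + TT μ A C q p q p + TT μ A C p q q p + TT μ A C q p p q)
      + (7/25)^3*(-24/25) * (TT μ A C p p p q + TT μ A C p p q p + TT μ A C p q p p
        + TT μ A C q p p p)
      + (7/25)*(-24/25)^3 * (TT μ A C q q p q + TT μ A C q q q p + TT μ A C p q q q
        + TT μ A C q p q q) := by
    have hb := bilin μ A C ![(7/25)^2, (7/25)*(-24/25), (7/25)*(-24/25), (-24/25)^2]
      ![p, p, q, q] ![p, q, p, q]
    simp only [Fin.sum_univ_four, Matrix.cons_val] at hb
    refine (h.trans hb).trans ?_
    ring
  have hq : TT μ A C q q q q = TT μ A C p p p p := by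
    simpa using (TT_perm μ A C q q q q (Equiv.swap p q))
  have h3 : TT μ A C q q p p = TT μ A C p p q q := by
    simpa using (TT_perm μ A C q q p p (Equiv.swap p q))
  have h4 : TT μ A C q p q p = TT μ A C p q p q := by
    simpa using (TT_perm μ A C q p q p (Equiv.swap p q))
  have h5 : TT μ A C q p p q = TT μ A C p q q p := by
    simpa using (TT_perm μ A C q p p q (Equiv.swap p q))
  have z1 : TT μ A C p p p q = 0 := TT_zero μ A C _ _ _ _ q (by simp [hpq])
  have z2 : TT μ A C p p q p = 0 := TT_zero μ A C _ _ _ _ q (by simp [hpq])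
  have z3 : TT μ A C p q p p = 0 := TT_zero μ A C _ _ _ _ q (by simp [hpq])
  have z4 : TT μ A C q p p p = 0 := TT_zero μ A C _ _ _ _ q (by simp [hpq])
  have z5 : TT μ A C q q p q = 0 := TT_zero μ A C _ _ _ _ q (by simp [hpq])
  have z6 : TT μ A C q q q p = 0 := TT_zero μ A C _ _ _ _ q (by simp [hpq])
  have z7 : TT μ A C p q q q = 0 := TT_zero μ A C _ _ _ _ q (by simp [hpq])
  have z8 : TT μ A C q p q q = 0 := TT_zero μ A C _ _ _ _ q (by simp [hpq])
  rw [z1, z2, z3, z4, z5, z6, z7, z8, h3, h4, h5, hq] at h2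
  linarith

lemma exists_perm (i j p q : Fin d) (h : i ≠ j) (h' : p ≠ q) :
    ∃ σ : Equiv.Perm (Fin d), σ i = p ∧ σ j = q := by
  refine ⟨(Equiv.swap i p).trans (Equiv.swap (Equiv.swap i p j) q), ?_, ?_⟩
  · simp only [Equiv.trans_apply, Equiv.swap_apply_left]
    refine Equiv.swap_apply_of_ne_of_ne ?_ h'
    intro hh
    apply h
    apply (Equiv.swap i p).injective
    rw [← hh, Equiv.swap_apply_left]
  · simp

lemma TT_form [μ.IsHaarMeasure] [IsProbabilityMeasure μ] (hd : 2 ≤ d) (A C : 𝕄) :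
    ∃ α β γ : ℝ, ∀ i j k l, TT μ A C i j k l =
      α * ((1 : 𝕄) i j * (1 : 𝕄) k l) + β * ((1 : 𝕄) i k * (1 : 𝕄) j l)
        + γ * ((1 : 𝕄) i l * (1 : 𝕄) j k) := by
  let p : Fin d := ⟨0, by omega⟩
  let q : Fin d := ⟨1, by omega⟩
  have hpq : p ≠ q := by simp [p, q]
  have hα : ∀ i j, i ≠ j → TT μ A C i i j j = TT μ A C p p q q := by
    intro i j hij
    obtain ⟨σ, h1, h2⟩ := exists_perm i j p q hij hpq
    rw [TT_perm μ A C i i j j σ, h1, h2]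
  have hβ : ∀ i j, i ≠ j → TT μ A C i j i j = TT μ A C p q p q := by
    intro i j hij
    obtain ⟨σ, h1, h2⟩ := exists_perm i j p q hij hpq
    rw [TT_perm μ A C i j i j σ, h1, h2]
  have hγ : ∀ i j, i ≠ j → TT μ A C i j j i = TT μ A C p q q p := by
    intro i j hij
    obtain ⟨σ, h1, h2⟩ := exists_perm i j p q hij hpq
    rw [TT_perm μ A C i j j i σ, h1, h2]
  have hδ : ∀ i, TT μ A C i i i i = TT μ A C p p q q + TT μ A C p q p q + TT μ A C p q q p := by
    intro i
    rw [TT_perm μ A C i i i i (Equiv.swap i p), Equiv.swap_apply_left, TT_rot μ A C p q hpq]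
  refine ⟨TT μ A C p p q q, TT μ A C p q p q, TT μ A C p q q p, fun i j k l => ?_⟩
  simp only [Matrix.one_apply]
  by_cases hij : i = j
  · subst hij
    by_cases hkl : k = l
    · subst hkl
      by_cases hik : i = k
      · subst hik
        simp [hδ]
      · simp [hα i k hik, hik]
    · rw [TT_zero μ A C i i k l k (by split_ifs <;> simp_all)]
      by_cases hik : i = k
      · subst hik; simp [hkl]
      · simp [hik, hkl]
  · by_cases hik : i = k
    · subst hik
      by_cases hjl : j = l
      · subst hjl
        simp [hβ i j hij, hij]
      · rw [TT_zero μ A C i j i l j (by split_ifs <;> simp_all)]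
        simp [hij, hjl, Ne.symm hij]
    · by_cases hil : i = l
      · subst hil
        by_cases hjk : j = k
        · subst hjk
          simp [hγ i j hij, hij]
        · rw [TT_zero μ A C i j k i j (by split_ifs <;> simp_all)]
          simp [hij, hjk, hik]
      · rw [TT_zero μ A C i j k l i (by split_ifs <;> simp_all)]
        simp [hij, hik, hil]

end helpers

/-- For Haar-distributed `M` on `O(d)` with `d ≥ 2` and fixed matrices `A`, `B`, `C`,
`E[M A Mᵀ B M C Mᵀ]
= ((d+1)/(d(d−1)(d+2))) (tr A tr C · B + tr(AC) tr B · I + tr(ACᵀ) · Bᵀ)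
− (1/(d(d−1)(d+2))) (tr(AC) · B + tr A tr B tr C · I + tr(ACᵀ) · B + tr(ACᵀ) tr B · I
+ tr A tr C · Bᵀ + tr(AC) · Bᵀ)`, entrywise. -/
theorem orthogonal_haar_second_order_expectation {d : ℕ} (hd : 2 ≤ d)
    (A B C : Matrix (Fin d) (Fin d) ℝ)
    (μ : Measure (Matrix.orthogonalGroup (Fin d) ℝ)) [μ.IsHaarMeasure] [IsProbabilityMeasure μ]
    (i i' : Fin d) :
    ∫ M : Matrix.orthogonalGroup (Fin d) ℝ,
        ((M : Matrix (Fin d) (Fin d) ℝ) * A * (M : Matrix (Fin d) (Fin d) ℝ)ᵀ * B *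
          (M : Matrix (Fin d) (Fin d) ℝ) * C * (M : Matrix (Fin d) (Fin d) ℝ)ᵀ) i i' ∂μ
      = (((d : ℝ) + 1) / ((d : ℝ) * ((d : ℝ) - 1) * ((d : ℝ) + 2))) *
          (A.trace * C.trace * B i i' +
            (A * C).trace * B.trace * (1 : Matrix (Fin d) (Fin d) ℝ) i i' +
            (A * Cᵀ).trace * Bᵀ i i')
        - (1 / ((d : ℝ) * ((d : ℝ) - 1) * ((d : ℝ) + 2))) *
          ((A * C).trace * B i i' +
            A.trace * B.trace * C.trace * (1 : Matrix (Fin d) (Fin d) ℝ) i i' +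
            (A * Cᵀ).trace * B i i' +
            (A * Cᵀ).trace * B.trace * (1 : Matrix (Fin d) (Fin d) ℝ) i i' +
            A.trace * C.trace * Bᵀ i i' +
            (A * C).trace * Bᵀ i i') := by
  obtain ⟨α, β, γ, hT⟩ := TT_form μ hd A C
  have hI := integrable_cj μ A C
  have hd0 : (d : ℝ) ≠ 0 := by positivity
  have hd2 : (2 : ℝ) ≤ d := by exact_mod_cast hd
  have hd1 : (d : ℝ) - 1 ≠ 0 := by linarith
  have hd3 : (d : ℝ) + 2 ≠ 0 := by linarith
  -- the three contractions
  have c1 : ∑ i, ∑ k, TT μ A C i i k k = A.trace * C.trace := by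
    have : ∀ M : Matrix.orthogonalGroup (Fin d) ℝ, ∑ i, ∑ k, cj A M i i * cj C M k k
        = A.trace * C.trace := by
      intro M
      rw [← Finset.sum_mul_sum]
      change (cj A M).trace * (cj C M).trace = _
      unfold cj
      rw [Matrix.trace_mul_comm, ← Matrix.mul_assoc, tr_mul_self, Matrix.trace_mul_comm _ (M.1)ᵀ,
        ← Matrix.mul_assoc, tr_mul_self, one_mul, one_mul]
    unfold TT
    simp_rw [← integral_finsetSum Finset.univ (fun _ _ => hI _ _ _ _)]
    rw [← integral_finsetSum Finset.univ
      (fun _ _ => integrable_finsetSum _ (fun _ _ => hI _ _ _ _))]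
    simp [this]
  have c2 : ∑ i, ∑ j, TT μ A C i j i j = (A * Cᵀ).trace := by
    have : ∀ M : Matrix.orthogonalGroup (Fin d) ℝ, ∑ i, ∑ j, cj A M i j * cj C M i j
        = (A * Cᵀ).trace := by
      intro M
      trans (cj A M * (cj C M)ᵀ).trace
      · simp [Matrix.trace, Matrix.mul_apply]
      · unfold cj
        rw [Matrix.transpose_mul, Matrix.transpose_mul, Matrix.transpose_transpose]
        calc _ = (M.1 * (A * ((M.1)ᵀ * M.1) * Cᵀ * (M.1)ᵀ)).trace := by
              simp only [Matrix.mul_assoc]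
          _ = (A * ((M.1)ᵀ * M.1) * Cᵀ * ((M.1)ᵀ * M.1)).trace := by
              rw [Matrix.trace_mul_comm]; simp only [Matrix.mul_assoc]
          _ = _ := by rw [tr_mul_self, mul_one, mul_one]
    unfold TT
    simp_rw [← integral_finsetSum Finset.univ (fun _ _ => hI _ _ _ _)]
    rw [← integral_finsetSum Finset.univ
      (fun _ _ => integrable_finsetSum _ (fun _ _ => hI _ _ _ _))]
    simp [this]
  have c3 : ∑ i, ∑ j, TT μ A C i j j i = (A * C).trace := by
    have : ∀ M : Matrix.orthogonalGroup (Fin d) ℝ, ∑ i, ∑ j, cj A M i j * cj C M j i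
        = (A * C).trace := by
      intro M
      trans (cj A M * cj C M).trace
      · simp [Matrix.trace, Matrix.mul_apply]
      · unfold cj
        calc _ = (M.1 * (A * ((M.1)ᵀ * M.1) * C * (M.1)ᵀ)).trace := by
              simp only [Matrix.mul_assoc]
          _ = (A * ((M.1)ᵀ * M.1) * C * ((M.1)ᵀ * M.1)).trace := by
              rw [Matrix.trace_mul_comm]; simp only [Matrix.mul_assoc]
          _ = _ := by rw [tr_mul_self, mul_one, mul_one]
    unfold TT
    simp_rw [← integral_finsetSum Finset.univ (fun _ _ => hI _ _ _ _)]
    rw [← integral_finsetSum Finset.univ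
      (fun _ _ => integrable_finsetSum _ (fun _ _ => hI _ _ _ _))]
    simp [this]
  simp [hT, Matrix.one_apply, Finset.sum_add_distrib, ← Finset.mul_sum] at c1 c2 c3
  have main : ∫ M : Matrix.orthogonalGroup (Fin d) ℝ,
        ((M : Matrix (Fin d) (Fin d) ℝ) * A * (M : Matrix (Fin d) (Fin d) ℝ)ᵀ * B *
          (M : Matrix (Fin d) (Fin d) ℝ) * C * (M : Matrix (Fin d) (Fin d) ℝ)ᵀ) i i' ∂μ
      = ∑ k, ∑ j, B j k * TT μ A C i j k i' := by
    unfold TT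
    simp_rw [← integral_const_mul]
    simp_rw [← integral_finsetSum Finset.univ (fun _ _ => (hI _ _ _ _).const_mul _)]
    rw [← integral_finsetSum Finset.univ
      (fun _ _ => integrable_finsetSum _ (fun _ _ => (hI _ _ _ _).const_mul _))]
    congr 1
    ext M
    trans (cj A M * B * cj C M) i i'
    · simp only [cj, Matrix.mul_assoc]
    · rw [Matrix.mul_apply]
      refine Finset.sum_congr rfl fun k _ => ?_
      rw [Matrix.mul_apply, Finset.sum_mul]
      refine Finset.sum_congr rfl fun j _ => ?_
      ring
  have fin : ∑ k, ∑ j, B j k * TT μ A C i j k i' =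
      α * B i i' + β * Bᵀ i i' + γ * (B.trace * (1 : Matrix (Fin d) (Fin d) ℝ) i i') := by
    simp only [hT, mul_add, Finset.sum_add_distrib]
    congr 1
    · congr 1
      · simp [Matrix.one_apply, mul_comm]
      · simp [Matrix.one_apply, mul_comm]
    · simp [Matrix.one_apply, Matrix.trace, mul_comm, Finset.mul_sum]
  have e : A.trace * B.trace * C.trace = B.trace * (A.trace * C.trace) := by ring
  rw [main, fin, e, ← c1, ← c2, ← c3]
  field_simp
  ring
end
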